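/- arXiv:math/9508218 — 4 statements merged into one kernel-verified Lean document; each statement's English description precedes it below -/
import Mathlib

section
/- The function F satisfies the recursion: F(1, S) = 1 for every S ≥ 1; F(n, 1) = ∞ for every n ≥ 2; and for every n ≥ 2 and S ≥ 2, F(n, S) = min over 1 ≤ m ≤ n − 1 of F(m, S) + F(m, S − 1) + F(n − m, S − 1) (with the convention that sums involving ∞ are ∞). -/
/-!
The upper bound on `F n S` is the usual strategy: pebble `m` with `S` pebbles, use it as a new
base to pebble `n` with the remaining `S - 1` pebbles, then unpebble `m` by running a solution for
`m` backwards with `S - 1` pebbles.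

For the lower bound take a solution `c` of minimal time `T`. Minimality gives two facts:
`{n}` occurs only at time `T`, and if `c j ⊆ {1, …, a}` then no earlier configuration has a pebble
above `a` (moves above `a` before time `j` could be deleted, `Pth.split`).
Let `m` be the maximum over `0 < j < T` of `min (c j)`, and `t₀` the last time it is attained.
At all times in `(0, T)` there is a pebble in `{1, …, m}`, so at most `S - 1` pebbles lie above `m`.
If after `t₀` at most `S - 1` pebbles are ever in `{1, …, m}`, then splitting the moves into those
at squares `≤ m` before `t₀`, those at squares `≤ m` after `t₀`, and those above `m` gives the bound
for `m`.

Otherwise some later configuration lies inside `{1, …, m}`, hence `c t₀ = {m}`. Let `m₁ < m` be the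
maximum of `min (c j)` over `t₀ < j < T`. After `t₀` there is always a pebble above `m₁`, and
(strictly before `T`) one at or below it. So `T ≥ F m S + 2 F m₁ (S-1) + X`, where `X` is the length
of a path from `{m}` to `{n}` with base `m₁` and `S - 1` pebbles. By induction
`F m S ≥ F k S + F k (S-1) + F (m-k) (S-1)` for some `k`. If `k ≥ m₁`, restricting the `X`-path to
squares above `k` shows the bound for `k`. If `k < m₁`, the upper bound for `F m₁ S` and monotonicity
of `F` in its first argument show the bound for `m₁` (`lower_exchange`).
-/

/-- A solution of Bennett's pebble game on `n` squares: a sequence of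
configurations `c 0, …, c T` (subsets of `{1, …, n}`), starting empty,
ending with exactly one pebble on square `n`, where consecutive
configurations differ in exactly one square `i`, and a pebble may be added
to or removed from square `i` only if `i = 1` or square `i - 1` is pebbled. -/
structure PebbleSolution (n : ℕ) where
  T : ℕ
  c : ℕ → Finset ℕ
  subset : ∀ j ≤ T, c j ⊆ Finset.Icc 1 n
  init : c 0 = ∅
  final : c T = {n}
  move : ∀ j, 1 ≤ j → j ≤ T → ∃ i,
    symmDiff (c (j - 1)) (c j) = {i} ∧ (i = 1 ∨ i - 1 ∈ c (j - 1))

/-- The space used by a solution: the maximum number of pebbles on the board. -/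
def PebbleSolution.space {n : ℕ} (s : PebbleSolution n) : ℕ :=
  (Finset.range (s.T + 1)).sup fun j => (s.c j).card

/-- `F n S` is the minimum number of moves of a solution of the pebble game on
`n` squares using at most `S` pebbles, or `⊤` if no such solution exists. -/
noncomputable def F (n S : ℕ) : ℕ∞ :=
  sInf {t : ℕ∞ | ∃ s : PebbleSolution n, s.space ≤ S ∧ t = (s.T : ℕ∞)}

/-- `Δ n S = F (n+1) S - F n S` for `n ≥ 1` when `F (n+1) S` is finite;
`Δ n S = 0` for `n ≤ 0`; `Δ n S = ⊤` otherwise. -/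
noncomputable def Δ (n : ℤ) (S : ℕ) : ℕ∞ :=
  if n ≤ 0 then 0
  else if F (n.toNat + 1) S < ⊤ then F (n.toNat + 1) S - F n.toNat S
  else ⊤

/-- For `n ≥ 2` (and `S ≥ 2`), `mOpt n S` is the least `m` with `1 ≤ m ≤ n - 1`
minimizing `F m S + F m (S-1) + F (n-m) (S-1)`; `mOpt 0 S = mOpt 1 S = 0`. -/
noncomputable def mOpt (n S : ℕ) : ℕ :=
  if n ≤ 1 then 0
  else sInf {m : ℕ | 1 ≤ m ∧ m ≤ n - 1 ∧
    ∀ m', 1 ≤ m' → m' ≤ n - 1 →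
      F m S + F m (S - 1) + F (n - m) (S - 1) ≤
        F m' S + F m' (S - 1) + F (n - m') (S - 1)}

/-- `xk k S = min { n ≥ 1 : Δ n S > 2 ^ k }`. -/
noncomputable def xk (k S : ℕ) : ℕ :=
  sInf {n : ℕ | 1 ≤ n ∧ (2 : ℕ∞) ^ k < Δ (n : ℤ) S}

/-- The minimum time-space product `TS n = min_{S ≥ 1} S * F n S`. -/
noncomputable def TS (n : ℕ) : ℕ :=
  sInf {t : ℕ | ∃ S : ℕ, 1 ≤ S ∧ (t : ℕ∞) = (S : ℕ∞) * F n S}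

/-- The binary entropy function. -/
noncomputable def H (γ : ℝ) : ℝ :=
  -γ * Real.logb 2 γ - (1 - γ) * Real.logb 2 (1 - γ)

/-! ### Paths of configurations -/

/-- A legal move from `B` to `C` at a square `i > b`, in the game where square `b` acts as a
permanently pebbled base. -/
def Step (b : ℕ) (B C : Finset ℕ) : Prop :=
  ∃ i, b < i ∧ (i = b + 1 ∨ i - 1 ∈ B) ∧ (∀ x, x ≠ i → (x ∈ B ↔ x ∈ C)) ∧ (i ∈ B ↔ i ∉ C)

theorem Step.symm {b : ℕ} {B C : Finset ℕ} (h : Step b B C) : Step b C B := by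
  obtain ⟨i, h1, h2, h3, h4⟩ := h
  refine ⟨i, h1, ?_, fun x hx => (h3 x hx).symm, by tauto⟩
  rcases h2 with h2 | h2
  · exact Or.inl h2
  · exact Or.inr ((h3 _ (by omega)).1 h2)

/-- `Pth b Q t A B`: there is a sequence of `t` moves with base `b` from `A` to `B`, all of whose
configurations (endpoints included) satisfy `Q`. -/
inductive Pth (b : ℕ) (Q : Finset ℕ → Prop) : ℕ → Finset ℕ → Finset ℕ → Prop
  | nil (A : Finset ℕ) : Q A → Pth b Q 0 A A
  | snoc (t : ℕ) (A B C : Finset ℕ) : Pth b Q t A B → Step b B C → Q C → Pth b Q (t + 1) A C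

/-- Configurations on the squares `b + 1, …, n` with at most `S` pebbles. -/
def Wd (b n S : ℕ) (C : Finset ℕ) : Prop := C ⊆ Finset.Ioc b n ∧ C.card ≤ S

theorem Pth.left {b : ℕ} {Q : Finset ℕ → Prop} {t : ℕ} {A B : Finset ℕ} (h : Pth b Q t A B) :
    Q A := by
  induction h with
  | nil A h => exact h
  | snoc t A B C _ _ _ ih => exact ih

theorem Pth.right {b : ℕ} {Q : Finset ℕ → Prop} {t : ℕ} {A B : Finset ℕ} (h : Pth b Q t A B) :
    Q B := by
  cases h with
  | nil A h => exact h
  | snoc t A B C _ _ h => exact h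

theorem Pth.map {b b' : ℕ} {Q Q' : Finset ℕ → Prop} (f : Finset ℕ → Finset ℕ)
    (hQ : ∀ C, Q C → Q' (f C))
    (hS : ∀ B C, Q B → Q C → Step b B C → Step b' (f B) (f C))
    {t : ℕ} {A B : Finset ℕ} (h : Pth b Q t A B) : Pth b' Q' t (f A) (f B) := by
  induction h with
  | nil A h => exact .nil _ (hQ _ h)
  | snoc t A B C h1 h2 h3 ih => exact .snoc _ _ _ _ ih (hS _ _ h1.right h3 h2) (hQ _ h3)

theorem Pth.mono {b : ℕ} {Q Q' : Finset ℕ → Prop} (hQ : ∀ C, Q C → Q' C)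
    {t : ℕ} {A B : Finset ℕ} (h : Pth b Q t A B) : Pth b Q' t A B :=
  h.map id hQ (fun _ _ _ _ h => h)

theorem Pth.trans {b : ℕ} {Q : Finset ℕ → Prop} {t u : ℕ} {A B C : Finset ℕ}
    (h : Pth b Q t A B) (h' : Pth b Q u B C) : Pth b Q (t + u) A C := by
  induction h' with
  | nil A _ => exact h
  | snoc u B C D _ h2 h3 ih => exact .snoc _ _ _ _ (ih h) h2 h3

theorem Pth.symm {b : ℕ} {Q : Finset ℕ → Prop} {t : ℕ} {A B : Finset ℕ}
    (h : Pth b Q t A B) : Pth b Q t B A := by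
  induction h with
  | nil A h => exact .nil _ h
  | snoc t A B C h1 h2 h3 ih =>
    have := (Pth.snoc 0 C C B (.nil _ h3) h2.symm h1.right).trans ih
    rwa [Nat.zero_add, Nat.add_comm] at this

theorem Pth.eq_of_zero {b : ℕ} {Q : Finset ℕ → Prop} {A B : Finset ℕ}
    (h : Pth b Q 0 A B) : A = B := by
  cases h; rfl

/-- Every move of a path acts either at a square `≤ m` or above `m`; this yields two paths whose
lengths add up, the upper one having `m` as its base. -/
theorem Pth.split {b m : ℕ} (hbm : b ≤ m) {Q Q1 Q2 : Finset ℕ → Prop}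
    (h1 : ∀ C, Q C → Q1 (C.filter (· ≤ m))) (h2 : ∀ C, Q C → Q2 (C.filter (m < ·)))
    {t : ℕ} {A B : Finset ℕ} (h : Pth b Q t A B) :
    ∃ t1 t2, t1 + t2 = t ∧ Pth b Q1 t1 (A.filter (· ≤ m)) (B.filter (· ≤ m)) ∧
      Pth m Q2 t2 (A.filter (m < ·)) (B.filter (m < ·)) := by
  induction h with
  | nil A h => exact ⟨0, 0, rfl, .nil _ (h1 _ h), .nil _ (h2 _ h)⟩
  | snoc t A B C h hs hC ih =>
    obtain ⟨t1, t2, rfl, p1, p2⟩ := ih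
    obtain ⟨i, hi, hi1, hi2, hi3⟩ := hs
    by_cases him : i ≤ m
    · refine ⟨t1 + 1, t2, by omega, .snoc _ _ _ _ p1 ⟨i, hi, ?_, ?_, ?_⟩ (h1 _ hC), ?_⟩
      · rcases hi1 with e | e
        · exact Or.inl e
        · exact Or.inr (by simp only [Finset.mem_filter]; exact ⟨e, by omega⟩)
      · intro x hx; simp only [Finset.mem_filter, hi2 x hx]
      · simp only [Finset.mem_filter]; tauto
      · have : B.filter (m < ·) = C.filter (m < ·) := by
          ext x
          simp only [Finset.mem_filter]
          by_cases hx : x = i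
          · subst hx; constructor <;> intro h <;> omega
          · rw [hi2 x hx]
        rwa [← this]
    · refine ⟨t1, t2 + 1, by omega, ?_, .snoc _ _ _ _ p2 ⟨i, by omega, ?_, ?_, ?_⟩ (h2 _ hC)⟩
      · have : B.filter (· ≤ m) = C.filter (· ≤ m) := by
          ext x
          simp only [Finset.mem_filter]
          by_cases hx : x = i
          · subst hx; constructor <;> intro h <;> omega
          · rw [hi2 x hx]
        rwa [← this]
      · by_cases e : i = m + 1
        · exact Or.inl e
        · refine Or.inr ?_
          simp only [Finset.mem_filter]
          exact ⟨hi1.resolve_left (by omega), by omega⟩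
      · intro x hx; simp only [Finset.mem_filter, hi2 x hx]
      · simp only [Finset.mem_filter]; grind

theorem Pth.exists_fun {b : ℕ} {Q : Finset ℕ → Prop} {t : ℕ} {A B : Finset ℕ}
    (h : Pth b Q t A B) : ∃ c : ℕ → Finset ℕ, c 0 = A ∧ c t = B ∧ (∀ j ≤ t, Q (c j)) ∧
      ∀ j < t, Step b (c j) (c (j + 1)) := by
  induction h with
  | nil A h => exact ⟨fun _ => A, rfl, rfl, fun _ _ => h, fun j hj => by omega⟩
  | snoc t A B C _ h2 h3 ih =>
    obtain ⟨c, c0, ct, cQ, cS⟩ := ih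
    refine ⟨fun j => if j ≤ t then c j else C, by simpa using c0, by simp, ?_, ?_⟩
    · intro j hj
      by_cases h : j ≤ t
      · simpa [h] using cQ j h
      · simpa [h] using h3
    · intro j hj
      rcases Nat.lt_succ_iff_lt_or_eq.1 hj with h | h
      · simpa [h.le, Nat.succ_le_of_lt h] using cS j h
      · subst h; simpa [ct] using h2

/-! ### Paths and the function `F` -/

theorem F_le_of_pth_zero {n S t : ℕ} (h : Pth 0 (Wd 0 n S) t ∅ {n}) : F n S ≤ t := by
  obtain ⟨c, c0, ct, cQ, cS⟩ := h.exists_fun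
  refine sInf_le ⟨⟨t, c, fun j hj => ?_, c0, ct, ?_⟩, ?_, rfl⟩
  · intro x hx
    have := Finset.mem_Ioc.1 ((cQ j hj).1 hx)
    exact Finset.mem_Icc.2 ⟨by omega, this.2⟩
  · intro j h1 h2
    obtain ⟨i, hi, hi1, hi2, hi3⟩ := cS (j - 1) (by omega)
    rw [Nat.sub_add_cancel h1] at hi2 hi3
    refine ⟨i, ?_, by simpa using hi1⟩
    ext x
    simp only [Finset.mem_symmDiff, Finset.mem_singleton]
    by_cases hx : x = i
    · subst hx; tauto
    · have := hi2 x hx; tauto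
  · refine Finset.sup_le fun j hj => (cQ j ?_).2
    simpa [Nat.lt_succ_iff] using hj

/-- A finite value of `F` is attained by some solution. -/
theorem exists_sol {n S : ℕ} (h : F n S ≠ ⊤) :
    ∃ s : PebbleSolution n, s.space ≤ S ∧ F n S = s.T := by
  have hne : {t : ℕ∞ | ∃ s : PebbleSolution n, s.space ≤ S ∧ t = (s.T : ℕ∞)}.Nonempty := by
    by_contra hc
    rw [Set.not_nonempty_iff_eq_empty] at hc
    exact h (by rw [F, hc, sInf_empty])
  exact csInf_mem hne

theorem PebbleSolution.step {n : ℕ} (s : PebbleSolution n) {j : ℕ} (hj : j < s.T) :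
    Step 0 (s.c j) (s.c (j + 1)) := by
  obtain ⟨i, h1, h2⟩ := s.move (j + 1) (by omega) hj
  rw [Nat.add_sub_cancel] at h1 h2
  have hm : ∀ x, x ∈ symmDiff (s.c j) (s.c (j + 1)) ↔ x = i := by simp [h1]
  simp only [Finset.mem_symmDiff] at hm
  refine ⟨i, ?_, by simpa using h2, fun x hx => ?_, ?_⟩
  · rcases (hm i).2 rfl with h | h
    · exact (Finset.mem_Icc.1 (s.subset j hj.le h.1)).1
    · exact (Finset.mem_Icc.1 (s.subset (j + 1) hj h.1)).1
  · have := (hm x).not.2 hx; tauto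
  · have := (hm i).2 rfl; tauto

/-- The segment of a solution between two times, as a path through the visited configurations. -/
theorem PebbleSolution.seg {n : ℕ} (s : PebbleSolution n) {i j : ℕ} (hij : i ≤ j) (hj : j ≤ s.T) :
    Pth 0 (fun C => ∃ k, i ≤ k ∧ k ≤ j ∧ C = s.c k) (j - i) (s.c i) (s.c j) := by
  induction j, hij using Nat.le_induction with
  | base => rw [Nat.sub_self]; exact .nil _ ⟨i, le_rfl, le_rfl, rfl⟩
  | succ j hij ih =>
    rw [Nat.succ_sub hij]
    refine .snoc _ _ _ _ ((ih (by omega)).mono ?_) (s.step hj) ⟨j + 1, by omega, le_rfl, rfl⟩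
    rintro C ⟨k, h1, h2, rfl⟩
    exact ⟨k, h1, by omega, rfl⟩

theorem PebbleSolution.wd {n S : ℕ} (s : PebbleSolution n) (hs : s.space ≤ S) {j : ℕ}
    (hj : j ≤ s.T) : Wd 0 n S (s.c j) := by
  refine ⟨fun x hx => ?_, ?_⟩
  · have := Finset.mem_Icc.1 (s.subset j hj hx)
    exact Finset.mem_Ioc.2 ⟨by omega, this.2⟩
  · refine le_trans ?_ hs
    exact Finset.le_sup (f := fun j => (s.c j).card) (by simpa [Nat.lt_succ_iff] using hj)

theorem exists_pth_zero {n S : ℕ} (h : F n S ≠ ⊤) :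
    ∃ t : ℕ, F n S = t ∧ Pth 0 (Wd 0 n S) t ∅ {n} := by
  obtain ⟨s, hs, hF⟩ := exists_sol h
  refine ⟨s.T, hF, ?_⟩
  have := s.seg (Nat.zero_le s.T) le_rfl
  rw [s.init, s.final] at this
  refine this.mono ?_
  rintro C ⟨k, -, hk, rfl⟩
  exact s.wd hs hk

/-- Shifting the board: a game with base `b` ending at `{n}` is a game on `n - b` squares. -/
theorem F_le_of_pth {b n S t : ℕ} (hb : b ≤ n) (h : Pth b (Wd b n S) t ∅ {n}) :
    F (n - b) S ≤ t := by
  have hinj : ∀ C : Finset ℕ, Set.InjOn (· + b) ((· + b) ⁻¹' (C : Set ℕ)) :=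
    fun C => (add_left_injective b).injOn
  have := h.map (b' := 0) (Q' := Wd 0 (n - b) S) (fun C => C.preimage (· + b) (hinj C)) ?_ ?_
  · refine F_le_of_pth_zero ?_
    convert this using 1
    · simp
    · ext x
      simp only [Finset.mem_singleton, Finset.mem_preimage]
      omega
  · rintro C ⟨h1, h2⟩
    refine ⟨fun x hx => ?_, le_trans ?_ h2⟩
    · have := Finset.mem_Ioc.1 (h1 (Finset.mem_preimage.1 hx))
      exact Finset.mem_Ioc.2 (by omega)
    · exact Finset.card_le_card_of_injOn (· + b) (fun x hx => by simpa using hx)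
        (add_left_injective b).injOn
  · rintro B C - - ⟨i, hi, h1, h2, h3⟩
    have e : i - b + b = i := by omega
    refine ⟨i - b, by omega, ?_, ?_, ?_⟩
    · rcases h1 with h1 | h1
      · left; omega
      · by_cases h : i = b + 1
        · left; omega
        · right
          rw [Finset.mem_preimage]
          convert h1 using 1
          omega
    · intro x hx
      simpa using h2 (x + b) (by omega)
    · simpa [e] using h3

theorem exists_pth {b n S : ℕ} (hb : b ≤ n) (h : F (n - b) S ≠ ⊤) :
    ∃ t : ℕ, F (n - b) S = t ∧ Pth b (Wd b n S) t ∅ {n} := by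
  obtain ⟨t, ht, p⟩ := exists_pth_zero h
  refine ⟨t, ht, ?_⟩
  have := p.map (b' := b) (Q' := Wd b n S) (fun C => C.map (addRightEmbedding b)) ?_ ?_
  · simpa [Nat.sub_add_cancel hb] using this
  · rintro C ⟨h1, h2⟩
    refine ⟨fun x hx => ?_, by simpa using h2⟩
    obtain ⟨y, hy, rfl⟩ := Finset.mem_map.1 hx
    have := Finset.mem_Ioc.1 (h1 hy)
    simp only [addRightEmbedding_apply, Finset.mem_Ioc]
    omega
  · rintro B C - - ⟨i, hi, h1, h2, h3⟩
    have hmem : ∀ (D : Finset ℕ) x, x ∈ D.map (addRightEmbedding b) ↔ b ≤ x ∧ x - b ∈ D := by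
      intro D x
      simp only [Finset.mem_map, addRightEmbedding_apply]
      constructor
      · rintro ⟨y, hy, rfl⟩
        exact ⟨by omega, by simpa using hy⟩
      · rintro ⟨h, h'⟩
        exact ⟨_, h', by omega⟩
    refine ⟨i + b, by omega, ?_, ?_, ?_⟩
    · rcases h1 with h1 | h1
      · left; omega
      · right
        rw [hmem]
        refine ⟨by omega, ?_⟩
        convert h1 using 1
        omega
    · intro x hx
      rw [hmem, hmem]
      by_cases hbx : b ≤ x
      · simpa [hbx] using h2 (x - b) (by omega)
      · simp [hbx]
    · rw [hmem, hmem]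
      simpa using h3

theorem Wd.lower {b m n S : ℕ} {C : Finset ℕ} (h : Wd b n S C) :
    Wd b m S (C.filter (· ≤ m)) := by
  refine ⟨fun x hx => ?_, (Finset.card_filter_le _ _).trans h.2⟩
  have h1 := Finset.mem_filter.1 hx
  have := Finset.mem_Ioc.1 (h.1 h1.1)
  exact Finset.mem_Ioc.2 ⟨this.1, h1.2⟩

theorem Wd.upper {b m n S : ℕ} {C : Finset ℕ} (h : Wd b n S C) :
    Wd m n S (C.filter (m < ·)) := by
  refine ⟨fun x hx => ?_, (Finset.card_filter_le _ _).trans h.2⟩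
  have h1 := Finset.mem_filter.1 hx
  have := Finset.mem_Ioc.1 (h.1 h1.1)
  exact Finset.mem_Ioc.2 ⟨h1.2, this.2⟩

/-- Restricting a path to the squares above a higher base `k` does not lengthen it. -/
theorem Pth.restrict_upper {b k n S t x y : ℕ} (hbk : b ≤ k) (hx : k < x) (hy : k < y)
    (h : Pth b (Wd b n S) t {x} {y}) : ∃ u ≤ t, Pth k (Wd k n S) u {x} {y} := by
  obtain ⟨t1, t2, e, -, p⟩ := h.split hbk (Q1 := fun _ => True) (Q2 := Wd k n S)
    (fun _ _ => trivial) (fun _ h => h.upper)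
  refine ⟨t2, by omega, ?_⟩
  rwa [Finset.filter_singleton, Finset.filter_singleton, if_pos hx, if_pos hy] at p

theorem F_mono {a a' S : ℕ} (ha : 1 ≤ a) (h : a ≤ a') : F a S ≤ F a' S := by
  by_cases ht : F a' S = ⊤
  · rw [ht]; exact le_top
  obtain ⟨t, e, p⟩ := exists_pth_zero ht
  obtain ⟨t1, t2, e', -, p2⟩ := p.split (Nat.zero_le (a' - a)) (Q1 := fun _ => True)
    (Q2 := Wd (a' - a) a' S) (fun _ _ => trivial) (fun _ h => h.upper)
  rw [Finset.filter_singleton, if_pos (by omega), Finset.filter_empty] at p2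
  have := F_le_of_pth (by omega) p2
  rw [show a' - (a' - a) = a by omega] at this
  rw [e]
  exact this.trans (by exact_mod_cast (by omega : t2 ≤ t))

/-! ### The upper bound -/

theorem F_upper {n S m : ℕ} (hm : 1 ≤ m) (hmn : m < n) :
    F n (S + 1) ≤ F m (S + 1) + F m S + F (n - m) S := by
  by_cases h1 : F m (S + 1) = ⊤
  · simp [h1]
  by_cases h2 : F m S = ⊤
  · simp [h2]
  by_cases h3 : F (n - m) S = ⊤
  · simp [h3]
  obtain ⟨t1, e1, p1⟩ := exists_pth_zero h1
  obtain ⟨t2, e2, p2⟩ := exists_pth_zero h2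
  obtain ⟨t3, e3, p3⟩ := exists_pth hmn.le h3
  have q1 : Pth 0 (Wd 0 n (S + 1)) t1 ∅ {m} :=
    p1.mono fun C h => ⟨h.1.trans (Finset.Ioc_subset_Ioc_right hmn.le), h.2⟩
  have q3 : Pth 0 (Wd 0 n (S + 1)) t3 (insert m ∅) (insert m {n}) := by
    refine p3.map (fun C => insert m C) ?_ ?_
    · rintro C ⟨h1, h2⟩
      refine ⟨?_, (Finset.card_insert_le _ _).trans (by omega)⟩
      intro x hx
      rcases Finset.mem_insert.1 hx with rfl | hx
      · exact Finset.mem_Ioc.2 ⟨by omega, hmn.le⟩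
      · have := Finset.mem_Ioc.1 (h1 hx)
        exact Finset.mem_Ioc.2 (by omega)
    · rintro B C - - ⟨i, hi, h1, h2, h3⟩
      refine ⟨i, by omega, Or.inr ?_, fun x hx => ?_, ?_⟩
      · rw [Finset.mem_insert]
        rcases h1 with h1 | h1
        · left; omega
        · right; exact h1
      · rw [Finset.mem_insert, Finset.mem_insert, h2 x hx]
      · have : i ≠ m := by omega
        simpa [this] using h3
  have q2 : Pth 0 (Wd 0 n (S + 1)) t2 (insert n {m}) (insert n ∅) := by
    refine p2.symm.map (fun C => insert n C) ?_ ?_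
    · rintro C ⟨h1, h2⟩
      refine ⟨?_, (Finset.card_insert_le _ _).trans (by omega)⟩
      intro x hx
      rcases Finset.mem_insert.1 hx with rfl | hx
      · exact Finset.mem_Ioc.2 ⟨by omega, le_rfl⟩
      · have := Finset.mem_Ioc.1 (h1 hx)
        exact Finset.mem_Ioc.2 (by omega)
    · rintro B C hB hC ⟨i, hi, h1, h2, h3⟩
      have hin : i ≠ n := by
        rintro rfl
        have a1 : i ∉ B := fun h => by have := Finset.mem_Ioc.1 (hB.1 h); omega
        have a2 : i ∉ C := fun h => by have := Finset.mem_Ioc.1 (hC.1 h); omega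
        tauto
      refine ⟨i, hi, ?_, fun x hx => ?_, ?_⟩
      · rcases h1 with h1 | h1
        · left; omega
        · right; exact Finset.mem_insert_of_mem h1
      · rw [Finset.mem_insert, Finset.mem_insert, h2 x hx]
      · simpa [hin] using h3
  rw [Finset.insert_empty] at q3 q2
  rw [Finset.pair_comm] at q2
  have := F_le_of_pth_zero ((q1.trans q3).trans q2)
  rw [e1, e2, e3]
  refine this.trans (le_of_eq ?_)
  push_cast
  ring

/-! ### The lower bound -/

/-- The largest minimum `m` of the configurations `c j` with `a < j < T`, and the last time it is
attained. -/
theorem exists_max_min {n a T : ℕ} {c : ℕ → Finset ℕ} (haT : a + 1 < T)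
    (hne : ∀ j, a < j → j < T → (c j).Nonempty) (hsub : ∀ j, a < j → j < T → c j ⊆ Finset.Icc 1 n) :
    ∃ m t, 1 ≤ m ∧ m ≤ n ∧ a < t ∧ t < T ∧ (c t).filter (· ≤ m) = {m} ∧
      (∀ j, a < j → j < T → ∃ x ∈ c j, x ≤ m) ∧
      ∀ j, t < j → j < T → (c j).filter (· ≤ m) ≠ {m} := by
  classical
  let P : ℕ → Prop := fun m => ∃ j, a < j ∧ j < T ∧ ∀ x ∈ c j, m ≤ x
  have hP1 : P 1 :=
    ⟨a + 1, by omega, haT, fun x hx =>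
      (Finset.mem_Icc.1 (hsub (a + 1) (by omega) haT hx)).1⟩
  have hPn : ∀ m, P m → m ≤ n := by
    rintro m ⟨j, h1, h2, h3⟩
    obtain ⟨x, hx⟩ := hne j h1 h2
    exact (h3 x hx).trans (Finset.mem_Icc.1 (hsub j h1 h2 hx)).2
  set m := Nat.findGreatest P n with hm
  have hPm : P m := Nat.findGreatest_spec (hPn 1 hP1) hP1
  have hm1 : 1 ≤ m := Nat.le_findGreatest (hPn 1 hP1) hP1
  have hall : ∀ j, a < j → j < T → ∃ x ∈ c j, x ≤ m := by
    intro j h1 h2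
    by_contra! hc
    have hp : P (m + 1) := ⟨j, h1, h2, fun x hx => hc x hx⟩
    have : m + 1 ≤ m := Nat.le_findGreatest (hPn _ hp) hp
    omega
  let R : ℕ → Prop := fun t => a < t ∧ t < T ∧ (c t).filter (· ≤ m) = {m}
  have hR : ∃ t, R t := by
    obtain ⟨j, h1, h2, h3⟩ := hPm
    obtain ⟨x, hx, hxm⟩ := hall j h1 h2
    obtain rfl : x = m := le_antisymm hxm (h3 x hx)
    refine ⟨j, h1, h2, ?_⟩
    ext y
    simp only [Finset.mem_filter, Finset.mem_singleton]
    constructor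
    · rintro ⟨h, h'⟩
      exact le_antisymm h' (h3 y h)
    · rintro rfl
      exact ⟨hx, le_rfl⟩
  obtain ⟨t', ht'⟩ := hR
  have hRt : R (Nat.findGreatest R T) := Nat.findGreatest_spec ht'.2.1.le ht'
  refine ⟨m, _, hm1, hPn m hPm, hRt.1, hRt.2.1, hRt.2.2, hall, fun j h1 h2 h3 => ?_⟩
  have : j ≤ Nat.findGreatest R T := Nat.le_findGreatest h2.le ⟨hRt.1.trans h1, h2, h3⟩
  omega

/-- In a time-minimal solution, once all pebbles lie in `{1, …, a}` at some time, they did so at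
all earlier times. -/
theorem sub_of_optimal {n S : ℕ} {s : PebbleSolution n} (hs : s.space ≤ S) (hF : F n S = s.T)
    {a i j : ℕ} (hij : i ≤ j) (hj : j ≤ s.T) (ha : ∀ x ∈ s.c j, x ≤ a) : ∀ x ∈ s.c i, x ≤ a := by
  have hseg : ∀ {i j}, i ≤ j → j ≤ s.T → Pth 0 (Wd 0 n S) (j - i) (s.c i) (s.c j) := by
    intro i j hij hj
    refine (s.seg hij hj).mono ?_
    rintro C ⟨k, -, hk, rfl⟩
    exact s.wd hs (hk.trans hj)
  have hlow : ∀ C, Wd 0 n S C → Wd 0 n S (C.filter (· ≤ a)) := fun C h =>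
    ⟨(Finset.filter_subset _ _).trans h.1, (Finset.card_filter_le _ _).trans h.2⟩
  obtain ⟨t1, t2, e, p, p'⟩ := (hseg (Nat.zero_le i) (hij.trans hj)).split (Nat.zero_le a)
    (Q2 := fun _ => True) hlow (fun _ _ => trivial)
  obtain ⟨u1, u2, e', q, q'⟩ := (hseg hij hj).split (Nat.zero_le a)
    (Q2 := fun _ => True) hlow (fun _ _ => trivial)
  have r := p.trans q
  rw [Finset.filter_true_of_mem ha, s.init, Finset.filter_empty] at r
  have := r.trans (hseg hj le_rfl)
  rw [s.final] at this
  have := F_le_of_pth_zero this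
  rw [hF] at this
  have : s.T ≤ t1 + u1 + (s.T - j) := by exact_mod_cast this
  obtain rfl : t2 = 0 := by omega
  have := p'.eq_of_zero
  rw [s.init, Finset.filter_empty] at this
  intro x hx
  by_contra hc
  have : x ∈ (∅ : Finset ℕ) := by
    rw [this]; exact Finset.mem_filter.2 ⟨hx, by omega⟩
  simp at this

/-- The case where a pebble is first brought to `m` and is then carried on to `n` with base
`m₁ < m`: this is no cheaper than a split at `k` or at `m₁`, where `k` is a split for `m`. -/
theorem lower_exchange {n S m m1 k X : ℕ} (hm1 : 1 ≤ m1) (hm1m : m1 < m) (hmn : m < n)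
    (hk : 1 ≤ k) (hkm : k < m)
    (hmk : F k (S + 1) + F k S + F (m - k) S ≤ F m (S + 1))
    (hX : Pth m1 (Wd m1 n S) X {m} {n}) {T : ℕ∞}
    (hT : F m (S + 1) + F m1 S + F m1 S + X ≤ T) :
    ∃ l, 1 ≤ l ∧ l < n ∧ F l (S + 1) + F l S + F (n - l) S ≤ T := by
  -- a path to `{m}` with base `l` continued by the restriction of the given path to `{n}`
  have key : ∀ l, m1 ≤ l → l < m → F (n - l) S ≤ F (m - l) S + X := by
    intro l h1 h2
    by_cases ht : F (m - l) S = ⊤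
    · simp [ht]
    obtain ⟨t, e, p⟩ := exists_pth h2.le ht
    obtain ⟨u, hu, q⟩ := hX.restrict_upper h1 h2 (h2.trans hmn)
    have p' : Pth l (Wd l n S) t ∅ {m} :=
      p.mono fun C h => ⟨h.1.trans (Finset.Ioc_subset_Ioc_right hmn.le), h.2⟩
    have := F_le_of_pth (h2.trans hmn).le (p'.trans q)
    rw [e]
    exact this.trans (by exact_mod_cast (by omega : t + u ≤ t + X))
  by_cases hc : m1 ≤ k
  · refine ⟨k, hk, hkm.trans hmn, le_trans ?_ hT⟩
    calc F k (S + 1) + F k S + F (n - k) S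
        ≤ F k (S + 1) + F k S + (F (m - k) S + X) := by gcongr; exact key k hc hkm
      _ = (F k (S + 1) + F k S + F (m - k) S) + 0 + 0 + X := by ring
      _ ≤ F m (S + 1) + F m1 S + F m1 S + X := by gcongr <;> exact zero_le
  · push Not at hc
    refine ⟨m1, hm1, hm1m.trans hmn, le_trans ?_ hT⟩
    calc F m1 (S + 1) + F m1 S + F (n - m1) S
        ≤ (F k (S + 1) + F k S + F (m1 - k) S) + F m1 S + (F (m - m1) S + X) := by
          gcongr
          · exact F_upper hk hc
          · exact key m1 le_rfl hm1m
      _ ≤ (F k (S + 1) + F k S + F m1 S) + F m1 S + (F (m - k) S + X) := by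
          gcongr ?_ + ?_ + _ + (?_ + _)
          · exact le_rfl
          · exact F_mono (by omega) (by omega)
          · exact F_mono (by omega) (by omega)
      _ = (F k (S + 1) + F k S + F (m - k) S) + F m1 S + F m1 S + X := by ring
      _ ≤ F m (S + 1) + F m1 S + F m1 S + X := by gcongr

theorem card_filter_lt_of_mem {C : Finset ℕ} {p : ℕ → Prop} [DecidablePred p] {S x : ℕ}
    (hC : C.card ≤ S + 1) (hx : x ∈ C) (hp : ¬ p x) : (C.filter p).card ≤ S := by
  have : (C.filter p).card < C.card :=
    Finset.card_lt_card (Finset.filter_ssubset.2 ⟨x, hx, hp⟩)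
  omega

theorem F_lower (S : ℕ) (hS : 1 ≤ S) (n : ℕ) (hn : 2 ≤ n) :
    ∃ m, 1 ≤ m ∧ m < n ∧ F m (S + 1) + F m S + F (n - m) S ≤ F n (S + 1) := by
  induction n using Nat.strong_induction_on with
  | _ n IH =>
  by_cases htop : F n (S + 1) = ⊤
  · exact ⟨1, le_rfl, hn, by rw [htop]; exact le_top⟩
  obtain ⟨s, hs, hF⟩ := exists_sol htop
  have hwd : ∀ {j}, j ≤ s.T → Wd 0 n (S + 1) (s.c j) := fun hj => s.wd hs hj
  have hT0 : 0 < s.T := by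
    by_contra h
    have h0 : s.T = 0 := by omega
    have h1 := s.final
    rw [h0, s.init] at h1
    exact absurd h1.symm (Finset.singleton_ne_empty n)
  -- the first move is at square `1`, and `n ≠ 1`
  have hT1 : 0 + 1 < s.T := by
    by_contra h
    have h0 : s.T = 1 := by omega
    obtain ⟨i, hi, h1, h2, h3⟩ := s.step hT0
    have h4 := s.final
    rw [h0] at h4
    rw [Nat.zero_add, h4, s.init] at h2 h3
    rw [s.init] at h1
    simp at h1 h3
    omega
  have hne : ∀ j, 0 < j → j < s.T → (s.c j).Nonempty := by
    intro j h1 h2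
    rw [Finset.nonempty_iff_ne_empty]
    intro h0
    have hz : ∀ i ≤ j, s.c i = ∅ := by
      intro i hi
      have := sub_of_optimal hs hF (a := 0) hi h2.le (by simp [h0])
      rw [Finset.eq_empty_iff_forall_notMem]
      intro x hx
      have a1 := this x hx
      have a2 := Finset.mem_Ioc.1 ((hwd (hi.trans h2.le)).1 hx)
      omega
    obtain ⟨i, -, -, -, h3⟩ := s.step hT0
    rw [hz 0 (by omega), hz (0 + 1) (by omega)] at h3
    simp at h3
  have hsub : ∀ j, j < s.T → s.c j ⊆ Finset.Icc 1 n := fun j h2 => s.subset j h2.le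
  obtain ⟨m, t0, hm1, hmn', h0t, htT, hfil, hall, hlast⟩ :=
    exists_max_min hT1 hne (fun j _ h => hsub j h)
  have hmem : ∀ {C : Finset ℕ} {m : ℕ}, C.filter (· ≤ m) = {m} → m ∈ C := by
    intro C m h
    have : m ∈ C.filter (· ≤ m) := by rw [h]; simp
    exact (Finset.mem_filter.1 this).1
  have hmn : m < n := by
    rcases hmn'.lt_or_eq with h | h
    · exact h
    exfalso
    subst h
    have hc : s.c t0 = {m} := by
      rw [← hfil, Finset.filter_true_of_mem]
      intro x hx
      exact (Finset.mem_Icc.1 (hsub t0 htT hx)).2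
    have p := s.seg (Nat.zero_le t0) htT.le
    rw [s.init, hc] at p
    have := F_le_of_pth_zero (p.mono (Q' := Wd 0 m (S + 1)) (by
      rintro C ⟨k, -, hk, rfl⟩
      exact hwd (hk.trans htT.le)))
    rw [hF] at this
    have : s.T ≤ t0 - 0 := by exact_mod_cast this
    omega
  have hfinlow : ∀ l, l < n → (s.c s.T).filter (· ≤ l) = ∅ := by
    intro l hl
    rw [s.final, Finset.filter_singleton, if_neg (by omega)]
  have hfinup : ∀ l, l < n → (s.c s.T).filter (l < ·) = {n} := by
    intro l hl
    rw [s.final, Finset.filter_singleton, if_pos hl]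
  -- above `m` there are always at most `S` pebbles
  have hup : ∀ j ≤ s.T, Wd m n S ((s.c j).filter (m < ·)) := by
    intro j hj
    refine ⟨(hwd hj).upper.1, ?_⟩
    rcases Nat.eq_zero_or_pos j with rfl | h
    · simp [s.init]
    rcases hj.lt_or_eq with h' | rfl
    · obtain ⟨x, hx, hxm⟩ := hall j h h'
      exact card_filter_lt_of_mem (hwd hj).2 hx (by omega)
    · rw [hfinup m hmn]; simpa using hS
  obtain ⟨a1, b1, e1, p1, q1⟩ := (s.seg (Nat.zero_le t0) htT.le).split (Nat.zero_le m)
    (Q1 := Wd 0 m (S + 1)) (Q2 := Wd m n S)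
    (by rintro C ⟨k, -, hk, rfl⟩; exact (hwd (hk.trans htT.le)).lower)
    (by rintro C ⟨k, -, hk, rfl⟩; exact hup k (hk.trans htT.le))
  rw [s.init, Finset.filter_empty, hfil] at p1
  rw [s.init, Finset.filter_empty] at q1
  have f1 := F_le_of_pth_zero p1
  by_cases hA : ∀ j, t0 ≤ j → j ≤ s.T → ((s.c j).filter (· ≤ m)).card ≤ S
  · obtain ⟨a2, b2, e2, p2, q2⟩ := (s.seg htT.le le_rfl).split (Nat.zero_le m)
      (Q1 := Wd 0 m S) (Q2 := Wd m n S)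
      (by rintro C ⟨k, hk', hk, rfl⟩; exact ⟨(hwd hk).lower.1, hA k hk' hk⟩)
      (by rintro C ⟨k, -, hk, rfl⟩; exact hup k hk)
    rw [hfil, hfinlow m hmn] at p2
    rw [hfinup m hmn] at q2
    have f2 := F_le_of_pth_zero p2.symm
    have f3 := F_le_of_pth hmn.le (q1.trans q2)
    refine ⟨m, hm1, hmn, ?_⟩
    rw [hF]
    calc F m (S + 1) + F m S + F (n - m) S
        ≤ (a1 : ℕ∞) + a2 + ((b1 + b2 : ℕ) : ℕ∞) := by gcongr
      _ = ((a1 + a2 + (b1 + b2) : ℕ) : ℕ∞) := by push_cast; rfl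
      _ ≤ s.T := by exact_mod_cast (by omega : a1 + a2 + (b1 + b2) ≤ s.T)
  · push Not at hA
    obtain ⟨j, hj0, hjT, hcard⟩ := hA
    -- all `S + 1` pebbles of `c j` lie in `{1, …, m}`
    have hjm : ∀ x ∈ s.c j, x ≤ m := by
      intro x hx
      by_contra hc
      have := card_filter_lt_of_mem (p := (· ≤ m)) (hwd hjT).2 hx hc
      omega
    have hct0 : s.c t0 = {m} := by
      rw [← hfil, Finset.filter_true_of_mem]
      exact sub_of_optimal hs hF hj0 hjT hjm
    have hjt : t0 < j := by
      rcases hj0.lt_or_eq with h | rfl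
      · exact h
      · rw [hfil] at hcard; simp at hcard; omega
    have hjT' : j < s.T := by
      rcases hjT.lt_or_eq with h | rfl
      · exact h
      · rw [hfinlow m hmn] at hcard; simp at hcard
    obtain ⟨l, t3, hl1, -, h0t3, ht3T, hfil3, hall3, -⟩ :=
      exists_max_min (a := t0) (T := s.T) (c := s.c) (n := n) (by omega)
        (fun j h h' => hne j (by omega) h') (fun j _ h => hsub j h)
    have hlm : l < m := by
      obtain ⟨x, hx, hxm⟩ := hall t3 (by omega) ht3T
      have hlx : l ≤ m := by
        by_contra hc
        have : x ∈ (s.c t3).filter (· ≤ l) := Finset.mem_filter.2 ⟨hx, by omega⟩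
        rw [hfil3, Finset.mem_singleton] at this
        omega
      rcases hlx.lt_or_eq with h | rfl
      · exact h
      · exact absurd hfil3 (hlast t3 h0t3 ht3T)
    have hln : l < n := hlm.trans hmn
    have hupl : ∀ j, t0 ≤ j → j ≤ s.T → Wd l n S ((s.c j).filter (l < ·)) := by
      intro j hj0 hj
      refine ⟨(hwd hj).upper.1, ?_⟩
      rcases hj0.lt_or_eq with h | rfl
      · rcases hj.lt_or_eq with h' | rfl
        · obtain ⟨x, hx, hxm⟩ := hall3 j h h'
          exact card_filter_lt_of_mem (hwd hj).2 hx (by omega)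
        · rw [hfinup l hln]; simpa using hS
      · exact (Finset.card_filter_le _ _).trans (by rw [hct0]; simpa using hS)
    -- a configuration inside `{1, …, l}` after `t0` would contradict minimality, as `m ∈ c t0`
    have hlowl : ∀ j, t0 ≤ j → j ≤ s.T → Wd 0 l S ((s.c j).filter (· ≤ l)) := by
      intro j hj0 hj
      refine ⟨(hwd hj).lower.1, ?_⟩
      have : ¬ ∀ x ∈ s.c j, x ≤ l := by
        intro h
        have := sub_of_optimal hs hF hj0 hj h m (hmem hfil)
        omega
      push Not at this
      obtain ⟨x, hx, hxl⟩ := this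
      exact card_filter_lt_of_mem (hwd hj).2 hx (by omega)
    obtain ⟨a2, b2, e2, p2, q2⟩ := (s.seg h0t3.le ht3T.le).split (Nat.zero_le l)
      (Q1 := Wd 0 l S) (Q2 := Wd l n S)
      (by rintro C ⟨k, hk', hk, rfl⟩; exact hlowl k hk' (hk.trans ht3T.le))
      (by rintro C ⟨k, hk', hk, rfl⟩; exact hupl k hk' (hk.trans ht3T.le))
    obtain ⟨a3, b3, e3, p3, q3⟩ := (s.seg ht3T.le le_rfl).split (Nat.zero_le l)
      (Q1 := Wd 0 l S) (Q2 := Wd l n S)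
      (by rintro C ⟨k, hk', hk, rfl⟩; exact hlowl k (by omega) hk)
      (by rintro C ⟨k, hk', hk, rfl⟩; exact hupl k (by omega) hk)
    rw [hct0, hfil3, Finset.filter_singleton, if_neg (by omega)] at p2
    rw [hfil3, hfinlow l hln] at p3
    have q := q2.trans q3
    rw [hct0, hfinup l hln, Finset.filter_singleton, if_pos hlm] at q
    have f2 := F_le_of_pth_zero p2
    have f3 := F_le_of_pth_zero p3.symm
    obtain ⟨k, hk1, hkm, hk⟩ := IH m hmn (by omega)
    refine lower_exchange hl1 hlm hmn hk1 hkm hk q ?_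
    rw [hF]
    calc F m (S + 1) + F l S + F l S + ((b2 + b3 : ℕ) : ℕ∞)
        ≤ (a1 : ℕ∞) + a2 + a3 + ((b2 + b3 : ℕ) : ℕ∞) := by gcongr
      _ = ((a1 + a2 + a3 + (b2 + b3) : ℕ) : ℕ∞) := by push_cast; rfl
      _ ≤ s.T := by exact_mod_cast (by omega : a1 + a2 + a3 + (b2 + b3) ≤ s.T)

/-! ### Boundary values and the recursion -/

theorem F_one (S : ℕ) (hS : 1 ≤ S) : F 1 S = 1 := by
  apply le_antisymm
  · have : Pth 0 (Wd 0 1 S) (0 + 1) ∅ {1} := by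
      refine .snoc 0 ∅ ∅ {1} (.nil _ ⟨by simp, by simp⟩) ⟨1, by omega, by simp, ?_, by simp⟩
        ⟨by simp, by simpa using hS⟩
      intro x hx
      simp [hx]
    exact_mod_cast F_le_of_pth_zero this
  · refine le_sInf ?_
    rintro t ⟨s, -, rfl⟩
    have : s.T ≠ 0 := by
      intro h0
      have h1 := s.final
      rw [h0, s.init] at h1
      exact absurd h1.symm (Finset.singleton_ne_empty 1)
    exact_mod_cast Nat.one_le_iff_ne_zero.2 this

/-- With one pebble, only the configurations `∅` and `{1}` are reachable. -/
theorem F_space_one (n : ℕ) (hn : 2 ≤ n) : F n 1 = ⊤ := by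
  by_contra h
  obtain ⟨s, hs, -⟩ := exists_sol h
  have key : ∀ j ≤ s.T, ∀ x ∈ s.c j, x = 1 := by
    intro j
    induction j with
    | zero => intro _ x hx; simp [s.init] at hx
    | succ j ih =>
      intro hj x hx
      have ih := ih (by omega)
      obtain ⟨i, hi, h1, h2, h3⟩ := s.step hj
      have hc := (s.wd hs hj).2
      by_cases hxi : x = i
      · subst hxi
        rcases h1 with h1 | h1
        · exact h1
        · exact absurd (Finset.card_le_one.1 hc x hx (x - 1) ((h2 _ (by omega)).1 h1)) (by omega)
      · exact ih x ((h2 x hxi).2 hx)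
  have := key s.T le_rfl n (by rw [s.final]; simp)
  omega

/-- The recursion for `F`: `F 1 S = 1` for `S ≥ 1`; `F n 1 = ⊤` for `n ≥ 2`;
and for `n ≥ 2`, `S ≥ 2`,
`F n S = min_{1 ≤ m ≤ n-1} (F m S + F m (S-1) + F (n-m) (S-1))`. -/
theorem F_recursion :
    (∀ S : ℕ, 1 ≤ S → F 1 S = 1) ∧
    (∀ n : ℕ, 2 ≤ n → F n 1 = ⊤) ∧
    (∀ n S : ℕ, 2 ≤ n → 2 ≤ S →
      F n S = (Finset.Icc 1 (n - 1)).inf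
        (fun m => F m S + F m (S - 1) + F (n - m) (S - 1))) := by
  refine ⟨F_one, F_space_one, fun n S hn hS => ?_⟩
  obtain ⟨S, rfl⟩ : ∃ S', S = S' + 1 := ⟨S - 1, by omega⟩
  rw [Nat.add_sub_cancel]
  apply le_antisymm
  · refine Finset.le_inf fun m hm => ?_
    have := Finset.mem_Icc.1 hm
    exact F_upper this.1 (by omega)
  · obtain ⟨m, h1, h2, h3⟩ := F_lower S (by omega) n hn
    exact (Finset.inf_le (Finset.mem_Icc.2 ⟨h1, by omega⟩)).trans h3
end

section
/- For every n ≥ 1 and S ≥ 1, F(n, S) < ∞ if and only if n ≤ 2^{S−1}. -/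
/-! ### Necessity: good configurations -/

/-- Configurations obtained from the empty one by adding pebbles (at most `S` in all), where a pebble
`p` making the total equal to `k` has to lie at distance at most `2 ^ (S - k)` above some occupied
square `r`, the square `0` counting as occupied. -/
inductive GoodConfig (S : ℕ) : Finset ℕ → Prop
  | empty : GoodConfig S ∅
  | insert (d : Finset ℕ) (p r : ℕ) (hp : p ∉ d) (hcard : d.card + 1 ≤ S)
      (hr : r = 0 ∨ r ∈ d) (hlt : r < p) (hle : p ≤ r + 2 ^ (S - (d.card + 1)))
      (hd : GoodConfig S d) : GoodConfig S (insert p d)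

/-- Confluence: every deletion permitted by the gap condition preserves goodness, not only the one
undoing the last insertion. -/
lemma GoodConfig.erase {S : ℕ} {c : Finset ℕ} (h : GoodConfig S c) :
    ∀ x ∈ c, ∀ r, (r = 0 ∨ r ∈ c) → r < x → x ≤ r + 2 ^ (S - c.card) →
      GoodConfig S (c.erase x) := by
  induction h with
  | empty => simp
  | insert d p q hp hcard hq hqp hle hd ih =>
    intro x hx r hr hrx hxle
    rw [Finset.card_insert_of_notMem hp] at hxle
    by_cases hxp : x = p
    · subst hxp
      rwa [Finset.erase_insert hp]
    have hxd : x ∈ d := (Finset.mem_insert.1 hx).resolve_left hxp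
    have hpow : 2 ^ (S - d.card) = 2 * 2 ^ (S - (d.card + 1)) := by
      rw [← pow_succ']
      congr 1
      omega
    have hpos : 0 < d.card := Finset.card_pos.2 ⟨x, hxd⟩
    have hce : (d.erase x).card + 1 = d.card := Finset.card_erase_add_one hxd
    have hxdel : GoodConfig S (d.erase x) := by
      by_cases hrp : r = p
      -- The reference square of `x` is `p`, which is gone: the two gaps merge.
      · exact ih x hxd q hq (by omega) (by omega)
      · refine ih x hxd r ?_ hrx (by omega)
        rcases hr with hr | hr
        · exact Or.inl hr
        · exact Or.inr ((Finset.mem_insert.1 hr).resolve_left hrp)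
    rw [Finset.erase_insert_of_ne (Ne.symm hxp)]
    have hp' : p ∉ d.erase x := fun h => hp (Finset.mem_of_mem_erase h)
    by_cases hqx : q = x
    -- The reference square of `p` is `x`, which is gone: the two gaps merge.
    · refine GoodConfig.insert _ p r hp' (by omega) ?_ (by omega) (by rw [hce]; omega) hxdel
      rcases hr with hr | hr
      · exact Or.inl hr
      · refine Or.inr (Finset.mem_erase.2 ⟨by omega, (Finset.mem_insert.1 hr).resolve_left ?_⟩)
        omega
    · refine GoodConfig.insert _ p q hp' (by omega) ?_ hqp (by rw [hce]; omega) hxdel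
      rcases hq with hq | hq
      · exact Or.inl hq
      · exact Or.inr (Finset.mem_erase.2 ⟨hqx, hq⟩)

lemma GoodConfig.le_of_singleton {S n : ℕ} (h : GoodConfig S {n}) : n ≤ 2 ^ (S - 1) := by
  generalize hc : ({n} : Finset ℕ) = c at h
  cases h with
  | empty => simp at hc
  | insert d p r hp hcard hr hlt hle hd =>
    have hpn : p = n := by
      have : p ∈ ({n} : Finset ℕ) := by rw [hc]; exact Finset.mem_insert_self p d
      simpa using this
    have hd0 : d = ∅ := by
      have := congrArg Finset.card hc
      rw [Finset.card_insert_of_notMem hp, Finset.card_singleton] at this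
      exact Finset.card_eq_zero.1 (by omega)
    subst hd0 hpn
    have hr0 : r = 0 := by simpa using hr
    simpa [hr0] using hle

/-- A symmetric difference equal to `{i}` is the insertion or the deletion of `i`. -/
lemma insert_or_erase_of_symmDiff {a b : Finset ℕ} {i : ℕ} (h : symmDiff a b = {i}) :
    (i ∉ a ∧ b = insert i a) ∨ (i ∈ a ∧ b = a.erase i) := by
  have hx : ∀ x, ((x ∈ a ∧ x ∉ b) ∨ (x ∈ b ∧ x ∉ a)) ↔ x = i := by
    intro x
    rw [← Finset.mem_symmDiff, h, Finset.mem_singleton]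
  by_cases hi : i ∈ a
  · refine Or.inr ⟨hi, ?_⟩
    ext x
    have h1 := hx x
    have h2 := hx i
    rw [Finset.mem_erase]
    grind
  · refine Or.inl ⟨hi, ?_⟩
    ext x
    have h1 := hx x
    have h2 := hx i
    rw [Finset.mem_insert]
    grind

lemma GoodConfig.move {S : ℕ} {a b : Finset ℕ} {i : ℕ} (ha : GoodConfig S a) (hb : b.card ≤ S)
    (hi : 1 ≤ i) (hab : symmDiff a b = {i}) (hleg : i = 1 ∨ i - 1 ∈ a) : GoodConfig S b := by
  have hr : i - 1 = 0 ∨ i - 1 ∈ a := hleg.imp_left (by omega)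
  rcases insert_or_erase_of_symmDiff hab with ⟨hia, rfl⟩ | ⟨hia, rfl⟩
  · rw [Finset.card_insert_of_notMem hia] at hb
    have := Nat.one_le_two_pow (n := S - (a.card + 1))
    exact GoodConfig.insert a i (i - 1) hia hb hr (by omega) (by omega) ha
  · have := Nat.one_le_two_pow (n := S - a.card)
    exact ha.erase i hia (i - 1) hr (by omega) (by omega)

lemma PebbleSolution.le_two_pow {n S : ℕ} (s : PebbleSolution n) (hs : s.space ≤ S) :
    n ≤ 2 ^ (S - 1) := by
  have hcard : ∀ j ≤ s.T, (s.c j).card ≤ S := fun j hj =>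
    (Finset.le_sup (f := fun j => (s.c j).card) (Finset.mem_range.2 (by omega))).trans hs
  have hgood : ∀ j ≤ s.T, GoodConfig S (s.c j) := by
    intro j
    induction j with
    | zero => intro _; rw [s.init]; exact GoodConfig.empty
    | succ j ih =>
      intro hj
      obtain ⟨i, hi, hleg⟩ := s.move (j + 1) (by omega) hj
      simp only [Nat.add_sub_cancel] at hi hleg
      have hmem : i ∈ Finset.Icc 1 n := by
        have : i ∈ symmDiff (s.c j) (s.c (j + 1)) := by rw [hi]; simp
        rcases Finset.mem_symmDiff.1 this with h | h
        · exact s.subset j (by omega) h.1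
        · exact s.subset (j + 1) hj h.1
      exact (ih (by omega)).move (hcard _ hj) (Finset.mem_Icc.1 hmem).1 hi hleg
  have := hgood s.T le_rfl
  rw [s.final] at this
  exact this.le_of_singleton

/-! ### Sufficiency: Bennett's recursive strategy -/

/-- One legal move between configurations on `{1, …, n}` with at most `S` pebbles. -/
def PebbleStep (n S : ℕ) (a b : Finset ℕ) : Prop :=
  a ⊆ Finset.Icc 1 n ∧ b ⊆ Finset.Icc 1 n ∧ a.card ≤ S ∧ b.card ≤ S ∧
    ∃ i, symmDiff a b = {i} ∧ (i = 1 ∨ i - 1 ∈ a)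

lemma PebbleStep.symm {n S : ℕ} {a b : Finset ℕ} (h : PebbleStep n S a b) :
    PebbleStep n S b a := by
  obtain ⟨ha, hb, hca, hcb, i, hi, hleg⟩ := h
  refine ⟨hb, ha, hcb, hca, i, by rwa [symmDiff_comm], hleg.imp_right fun h => ?_⟩
  -- Square `i - 1` is pebbled, so it is not `0`, hence differs from `i` and is untouched by the move.
  have h1 := (Finset.mem_Icc.1 (ha h)).1
  rcases insert_or_erase_of_symmDiff hi with ⟨_, rfl⟩ | ⟨_, rfl⟩
  · exact Finset.mem_insert_of_mem h
  · exact Finset.mem_erase.2 ⟨by omega, h⟩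

lemma reach_symm {n S : ℕ} {a b : Finset ℕ} (h : Relation.ReflTransGen (PebbleStep n S) a b) :
    Relation.ReflTransGen (PebbleStep n S) b a := by
  induction h with
  | refl => exact .refl
  | tail _ hbc ih => exact .head hbc.symm ih

/-- With `k + 1` spare pebbles, a pebble can be added at distance `d ≤ 2 ^ k` above an occupied square
`r` (or `r = 0`), provided the squares in between and the target are free. -/
lemma reach_insert (n S k : ℕ) : ∀ (c : Finset ℕ) (r d : ℕ), c ⊆ Finset.Icc 1 n →
    c.card + k + 1 ≤ S → (r = 0 ∨ r ∈ c) → 1 ≤ d → d ≤ 2 ^ k → r + d ≤ n →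
    (∀ x ∈ c, x ≤ r ∨ r + d < x) →
    Relation.ReflTransGen (PebbleStep n S) c (insert (r + d) c) := by
  induction k with
  | zero =>
    intro c r d hc hcard hr hd1 hd hn hfree
    obtain rfl : d = 1 := by simp at hd; omega
    have hnot : r + 1 ∉ c := fun h => by have := hfree _ h; omega
    refine .single ⟨hc, ?_, by omega, ?_, r + 1, ?_, ?_⟩
    · exact Finset.insert_subset (Finset.mem_Icc.2 ⟨by omega, hn⟩) hc
    · rw [Finset.card_insert_of_notMem hnot]; omega
    · ext x
      simp only [Finset.mem_symmDiff, Finset.mem_insert, Finset.mem_singleton]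
      grind
    · exact hr.imp (by omega) (by simp)
  | succ k ih =>
    intro c r d hc hcard hr hd1 hd hn hfree
    by_cases hdk : d ≤ 2 ^ k
    · exact ih c r d hc (by omega) hr hd1 hdk hn hfree
    have hpos := Nat.one_le_two_pow (n := k)
    have hpow : 2 ^ (k + 1) = 2 * 2 ^ k := pow_succ' 2 k
    generalize 2 ^ k = D at *
    obtain ⟨e, rfl⟩ : ∃ e, d = D + e := ⟨d - D, by omega⟩
    have hm : r + D ∉ c := fun h => by have := hfree _ h; omega
    have ht : r + (D + e) ∉ c := fun h => by have := hfree _ h; omega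
    have h1 := ih c r D hc (by omega) hr hpos le_rfl (by omega)
      (fun x hx => by have := hfree x hx; omega)
    have h2 := ih (insert (r + D) c) (r + D) e
      (Finset.insert_subset (Finset.mem_Icc.2 ⟨by omega, by omega⟩) hc)
      (by rw [Finset.card_insert_of_notMem hm]; omega) (by simp) (by omega) (by omega) (by omega)
      (fun x hx => by
        rcases Finset.mem_insert.1 hx with rfl | hx
        · omega
        · have := hfree x hx; omega)
    have h3 := ih (insert (r + (D + e)) c) r D
      (Finset.insert_subset (Finset.mem_Icc.2 ⟨by omega, by omega⟩) hc)
      (by rw [Finset.card_insert_of_notMem ht]; omega)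
      (hr.imp_right Finset.mem_insert_of_mem) hpos le_rfl (by omega)
      (fun x hx => by
        rcases Finset.mem_insert.1 hx with rfl | hx
        · omega
        · have := hfree x hx; omega)
    rw [Finset.insert_comm] at h3
    rw [Nat.add_assoc] at h2
    exact (h1.trans h2).trans (reach_symm h3)

lemma exists_seq_of_reach {n S : ℕ} {a b : Finset ℕ} (ha : a ⊆ Finset.Icc 1 n) (hca : a.card ≤ S)
    (h : Relation.ReflTransGen (PebbleStep n S) a b) :
    ∃ (T : ℕ) (c : ℕ → Finset ℕ), c 0 = a ∧ c T = b ∧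
      (∀ j ≤ T, c j ⊆ Finset.Icc 1 n ∧ (c j).card ≤ S) ∧
      ∀ j < T, PebbleStep n S (c j) (c (j + 1)) := by
  induction h with
  | refl => exact ⟨0, fun _ => a, rfl, rfl, fun _ _ => ⟨ha, hca⟩, by simp⟩
  | @tail b b' _ hstep ih =>
    obtain ⟨T, c, h0, hT, hsub, hmove⟩ := ih
    refine ⟨T + 1, fun j => if j ≤ T then c j else b', by simp [h0], by simp, ?_, ?_⟩
    · intro j hj
      by_cases hjT : j ≤ T
      · simpa [hjT] using hsub j hjT
      · simpa [hjT] using And.intro hstep.2.1 hstep.2.2.2.1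
    · intro j hj
      by_cases hjT : j = T
      · subst hjT
        simpa [hT] using hstep
      · have h1 : j ≤ T := by omega
        have h2 : j + 1 ≤ T := by omega
        simpa only [h1, h2, if_true] using hmove j (by omega)

lemma exists_solution {n S : ℕ} (hn : 1 ≤ n) (hS : 1 ≤ S) (h : n ≤ 2 ^ (S - 1)) :
    ∃ s : PebbleSolution n, s.space ≤ S := by
  have hreach := reach_insert n S (S - 1) ∅ 0 n (by simp) (by simp; omega) (Or.inl rfl) hn h
    (by omega) (by simp)
  obtain ⟨T, c, h0, hT, hsub, hmove⟩ := exists_seq_of_reach (by simp) (by simp) hreach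
  refine ⟨⟨T, c, fun j hj => (hsub j hj).1, h0, by simpa using hT, ?_⟩, ?_⟩
  · intro j hj1 hjT
    have := (hmove (j - 1) (by omega)).2.2.2.2
    rwa [Nat.sub_add_cancel hj1] at this
  · refine Finset.sup_le fun j hj => (hsub j ?_).2
    have := Finset.mem_range.1 hj
    simp only at this
    omega

/-- `F n S` is finite iff `n ≤ 2 ^ (S - 1)`. -/
theorem F_finite_iff (n S : ℕ) (hn : 1 ≤ n) (hS : 1 ≤ S) :
    F n S < ⊤ ↔ n ≤ 2 ^ (S - 1) := by
  constructor
  · intro h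
    obtain ⟨_, ⟨s, hs, _⟩, _⟩ := sInf_lt_iff.1 h
    exact s.le_two_pow hs
  · intro h
    obtain ⟨s, hs⟩ := exists_solution hn hS h
    exact sInf_lt_iff.2 ⟨_, ⟨s, hs, rfl⟩, ENat.natCast_lt_top _⟩
end

section
/- For every n ≥ 2 and S ≥ 2, m(n, S) ≤ ⌊n/2⌋. -/
/-- The configuration on `k` squares left from a configuration `c` on `k + d` squares when the
first `d` squares are forgotten and the others are renumbered to `1, …, k`. -/
def shiftConfig (k d : ℕ) (c : Finset ℕ) : Finset ℕ :=
  (Finset.Icc 1 k).filter fun x => x + d ∈ c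

theorem mem_shiftConfig {k d x : ℕ} {c : Finset ℕ} :
    x ∈ shiftConfig k d c ↔ (1 ≤ x ∧ x ≤ k) ∧ x + d ∈ c := by
  simp [shiftConfig]

theorem card_shiftConfig_le (k d : ℕ) (c : Finset ℕ) : (shiftConfig k d c).card ≤ c.card := by
  refine Finset.card_le_card_of_injOn (fun x => x + d) ?_ ?_
  · intro x hx
    exact (mem_shiftConfig.1 hx).2
  · intro x _ y _ h
    exact Nat.add_right_cancel h

/-- A legal move becomes, after forgetting the first `d` squares, either trivial or legal. -/
theorem shiftConfig_move {k d i : ℕ} {a b : Finset ℕ} (hi : symmDiff a b = {i})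
    (hleg : i = 1 ∨ i - 1 ∈ a) :
    shiftConfig k d b = shiftConfig k d a ∨
      ∃ i', symmDiff (shiftConfig k d a) (shiftConfig k d b) = {i'} ∧
        (i' = 1 ∨ i' - 1 ∈ shiftConfig k d a) := by
  have key : ∀ x, ((x ∈ a ∧ x ∉ b) ∨ (x ∈ b ∧ x ∉ a)) ↔ x = i := fun x => by
    rw [← Finset.mem_symmDiff, hi, Finset.mem_singleton]
  by_cases h : d + 1 ≤ i ∧ i ≤ d + k
  · right
    refine ⟨i - d, ?_, ?_⟩
    · ext x
      have := key (x + d)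
      simp only [Finset.mem_symmDiff, mem_shiftConfig, Finset.mem_singleton]
      have e : x = i - d ↔ x + d = i := by omega
      have e' : x + d = i → 1 ≤ x ∧ x ≤ k := by omega
      rw [e]
      tauto
    · rcases Nat.eq_or_lt_of_le h.1 with h1 | h1
      · left; omega
      · right
        rw [mem_shiftConfig]
        refine ⟨by omega, ?_⟩
        have e : i - d - 1 + d = i - 1 := by omega
        rw [e]
        exact hleg.resolve_left (by omega)
  · left
    ext x
    have := key (x + d)
    simp only [mem_shiftConfig]
    have e : 1 ≤ x ∧ x ≤ k → x + d ≠ i := by omega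
    tauto

/-- The first `j` moves of a solution on `k + d` squares induce a legal sequence of at most `j`
moves on `k` squares, ending in the shifted configuration. -/
theorem exists_shift_path {k d S : ℕ} (s : PebbleSolution (k + d)) (hs : s.space ≤ S) (j : ℕ)
    (hj : j ≤ s.T) :
    ∃ (T : ℕ) (c : ℕ → Finset ℕ), T ≤ j ∧
      (∀ l ≤ T, c l ⊆ Finset.Icc 1 k ∧ (c l).card ≤ S) ∧
      c 0 = ∅ ∧ c T = shiftConfig k d (s.c j) ∧
      ∀ l, 1 ≤ l → l ≤ T → ∃ i,
        symmDiff (c (l - 1)) (c l) = {i} ∧ (i = 1 ∨ i - 1 ∈ c (l - 1)) := by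
  induction j with
  | zero =>
    refine ⟨0, fun _ => ∅, le_rfl, by simp, rfl, ?_, by omega⟩
    simp [s.init, shiftConfig]
  | succ j ih =>
    obtain ⟨T, c, hT, hc, h0, hlast, hm⟩ := ih (by omega)
    obtain ⟨i, hi, hleg⟩ := s.move (j + 1) (by omega) hj
    rw [Nat.add_sub_cancel] at hi hleg
    rcases shiftConfig_move (k := k) (d := d) hi hleg with heq | hmove
    · exact ⟨T, c, by omega, hc, h0, by rw [hlast, heq], hm⟩
    · refine ⟨T + 1, fun l => if l ≤ T then c l else shiftConfig k d (s.c (j + 1)), by omega,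
        ?_, by simp [h0], by simp, ?_⟩
      · intro l _
        by_cases hlT : l ≤ T
        · simpa only [if_pos hlT] using hc l hlT
        · simp only [if_neg hlT]
          refine ⟨Finset.filter_subset _ _, (card_shiftConfig_le _ _ _).trans (le_trans ?_ hs)⟩
          exact Finset.le_sup (f := fun j => (s.c j).card)
            (Finset.mem_range.2 (Nat.lt_succ_of_le hj))
      · intro l hl1 hl
        by_cases hlT : l ≤ T
        · have hlT' : l - 1 ≤ T := by omega
          simpa only [if_pos hlT, if_pos hlT'] using hm l hl1 hlT
        · have hlT' : l - 1 = T := by omega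
          simpa only [if_neg hlT, hlT', le_refl, if_true, hlast] using hmove

theorem F_mono_s5 {k m S : ℕ} (hk : 1 ≤ k) (hkm : k ≤ m) : F k S ≤ F m S := by
  obtain ⟨d, rfl⟩ := Nat.exists_eq_add_of_le hkm
  refine le_sInf ?_
  rintro t ⟨s, hs, rfl⟩
  obtain ⟨T, c, hT, hc, h0, hlast, hm⟩ := exists_shift_path s hs s.T le_rfl
  have hfin : c T = {k} := by
    rw [hlast, s.final]
    ext x
    rw [mem_shiftConfig, Finset.mem_singleton, Finset.mem_singleton]
    omega
  refine le_trans (sInf_le ⟨⟨T, c, fun l hl => (hc l hl).1, h0, hfin, hm⟩, ?_, rfl⟩)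
    (Nat.cast_le.2 hT)
  refine Finset.sup_le fun l hl => (hc l ?_).2
  exact Nat.le_of_lt_succ (Finset.mem_range.1 hl)

/-- The least minimizer satisfies `m(n, S) ≤ ⌊n / 2⌋`. -/
theorem mOpt_le_half (n S : ℕ) (hn : 2 ≤ n) (hS : 2 ≤ S) :
    mOpt n S ≤ n / 2 := by
  rw [mOpt, if_neg (by omega)]
  set A := {m : ℕ | 1 ≤ m ∧ m ≤ n - 1 ∧
    ∀ m', 1 ≤ m' → m' ≤ n - 1 →
      F m S + F m (S - 1) + F (n - m) (S - 1) ≤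
        F m' S + F m' (S - 1) + F (n - m') (S - 1)} with hA
  rcases A.eq_empty_or_nonempty with h | h
  · simp [h]
  obtain ⟨h1, h2, h3⟩ := Nat.sInf_mem h
  by_contra hlt
  have hmem : n - sInf A ∈ A := by
    refine ⟨by omega, by omega, fun m' hm1 hm2 => le_trans ?_ (h3 m' hm1 hm2)⟩
    rw [Nat.sub_sub_self (by omega), add_right_comm]
    gcongr
    exact F_mono_s5 (by omega) (by omega)
  have := Nat.sInf_le hmem
  omega
end

section
/- Δ(n, S) is nondecreasing in n: for every S ≥ 1 and integers n ≤ n', Δ(n, S) ≤ Δ(n', S) (inequality in ℕ ∪ {∞}). -/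
namespace Pebble

open Finset

/-! ### Moves, paths and projections -/

/-- A legal move: the configurations `a` and `b` differ exactly in one square `i ≥ 1`, and `i = 1`
or square `i - 1` is pebbled. -/
def Step (a b : Finset ℕ) : Prop :=
  ∃ i, 1 ≤ i ∧ (∀ j, j ≠ i → (j ∈ a ↔ j ∈ b)) ∧ (i ∈ a ↔ i ∉ b) ∧ (i = 1 ∨ i - 1 ∈ a)

/-- `Path p a b T`: a sequence of `T` moves from `a` to `b` all of whose configurations, endpoints
included, satisfy `p`. -/
inductive Path (p : Finset ℕ → Prop) : Finset ℕ → Finset ℕ → ℕ → Prop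
  | nil {a : Finset ℕ} : p a → Path p a a 0
  | cons {a b c : Finset ℕ} {T : ℕ} : p a → Step a b → Path p b c T → Path p a c (T + 1)

/-- The pebbles of `c` on squares `≤ x`. -/
def low (x : ℕ) (c : Finset ℕ) : Finset ℕ := c.filter (· ≤ x)

/-- The pebbles of `c` on squares `> x`, renumbered so that square `x + 1` becomes square `1`. -/
def high (x : ℕ) (c : Finset ℕ) : Finset ℕ := (c.filter (x < ·)).image (· - x)

/-- Square `0` does not belong to the board, and at most `S` pebbles are used. -/
def Ok (S : ℕ) (c : Finset ℕ) : Prop := 0 ∉ c ∧ c.card ≤ S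

/-- `Reach n S T` says that `F n S ≤ T`, in terms of paths. Configurations may use squares beyond `n`;
projecting by `low n` removes them. -/
def Reach (n S T : ℕ) : Prop := ∃ T' ≤ T, Path (Ok S) ∅ {n} T'

theorem mem_low {x i : ℕ} {c : Finset ℕ} : i ∈ low x c ↔ i ∈ c ∧ i ≤ x := by
  simp [low]

theorem mem_high {x i : ℕ} {c : Finset ℕ} : i ∈ high x c ↔ 1 ≤ i ∧ i + x ∈ c := by
  simp only [high, mem_image, mem_filter]
  constructor
  · rintro ⟨j, ⟨hj, hx⟩, rfl⟩
    exact ⟨by omega, by rwa [Nat.sub_add_cancel hx.le]⟩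
  · rintro ⟨h1, h2⟩
    exact ⟨i + x, ⟨h2, by omega⟩, by omega⟩

theorem low_empty (x : ℕ) : low x ∅ = ∅ := rfl

theorem high_empty (x : ℕ) : high x ∅ = ∅ := rfl

theorem low_subset (x : ℕ) (c : Finset ℕ) : low x c ⊆ c := filter_subset _ _

theorem card_high (x : ℕ) (c : Finset ℕ) : (high x c).card = (c.filter (x < ·)).card := by
  apply card_image_of_injOn
  intro a ha b hb hab
  simp only [coe_filter, Set.mem_ofPred_eq] at ha hb
  simp only at hab
  omega

theorem card_low_add_high_le {x k : ℕ} (h : x ≤ k) (c : Finset ℕ) :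
    (low x c).card + (high k c).card ≤ c.card := by
  rw [card_high, low, ← card_union_of_disjoint]
  · exact card_le_card (union_subset (filter_subset _ _) (filter_subset _ _))
  · rw [disjoint_left]
    intro i h1 h2
    simp only [mem_filter] at h1 h2
    omega

theorem card_low_le (x : ℕ) (c : Finset ℕ) : (low x c).card ≤ c.card :=
  card_le_card (low_subset x c)

theorem card_high_le (x : ℕ) (c : Finset ℕ) : (high x c).card ≤ c.card :=
  (Nat.le_add_left _ _).trans (card_low_add_high_le le_rfl c)

theorem card_low_lt {x i : ℕ} {c : Finset ℕ} (hi : i ∈ c) (hx : x < i) :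
    (low x c).card < c.card := by
  apply card_lt_card
  refine ⟨low_subset x c, fun h => ?_⟩
  have := mem_low.1 (h hi)
  omega

theorem Step.symm {a b : Finset ℕ} (h : Step a b) : Step b a := by
  obtain ⟨i, h1, h2, h3, h4⟩ := h
  refine ⟨i, h1, fun j hj => (h2 j hj).symm, by tauto, ?_⟩
  rcases h4 with h4 | h4
  · exact Or.inl h4
  · exact Or.inr ((h2 (i - 1) (by omega)).1 h4)

/-- A move projects under `low x` to a move or to nothing. -/
theorem Step.low {a b : Finset ℕ} (h : Step a b) (x : ℕ) :
    low x a = low x b ∨ Step (low x a) (low x b) := by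
  obtain ⟨i, h1, h2, h3, h4⟩ := h
  by_cases hi : i ≤ x
  · right
    refine ⟨i, h1, fun j hj => ?_, ?_, ?_⟩
    · simp [mem_low, h2 j hj]
    · simp [mem_low, h3, hi]
    · rcases h4 with h4 | h4
      · exact Or.inl h4
      · exact Or.inr (mem_low.2 ⟨h4, by omega⟩)
  · left
    ext j
    by_cases hj : j = i
    · subst hj; simp [mem_low, hi]
    · simp [mem_low, h2 j hj]

/-- A move affects at most one of the two projections to the squares `≤ x` and `> k`, so the lengths
of the two projected paths add up to at most the length of the path. -/
theorem Step.split {a b : Finset ℕ} (h : Step a b) {x k : ℕ} (hxk : x ≤ k) :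
    (Pebble.low x a = Pebble.low x b ∧ (high k a = high k b ∨ Step (high k a) (high k b))) ∨
      (Step (Pebble.low x a) (Pebble.low x b) ∧ high k a = high k b) := by
  obtain ⟨i, h1, h2, h3, h4⟩ := id h
  by_cases hi : i ≤ k
  · have hq : high k a = high k b := by
      ext j
      rw [mem_high, mem_high]
      refine and_congr_right fun hj => h2 _ (by omega)
    rcases h.low x with h | h
    · exact Or.inl ⟨h, Or.inl hq⟩
    · exact Or.inr ⟨h, hq⟩
  · left
    refine ⟨?_, Or.inr ⟨i - k, by omega, fun j hj => ?_, ?_, ?_⟩⟩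
    · ext j
      by_cases hj : j = i
      · subst hj; simp only [mem_low]; constructor <;> intro h <;> omega
      · simp [mem_low, h2 j hj]
    · rw [mem_high, mem_high]
      refine and_congr_right fun hj' => h2 _ (by omega)
    · rw [mem_high, mem_high, Nat.sub_add_cancel (by omega), h3]
      have : 1 ≤ i - k := by omega
      tauto
    · rcases h4 with h4 | h4
      · left; omega
      · by_cases hik : i - k = 1
        · exact Or.inl hik
        · right
          rw [mem_high]
          refine ⟨by omega, ?_⟩
          rwa [show i - k - 1 + k = i - 1 by omega]

/-! ### Operations on paths -/

namespace Path

variable {p q r R : Finset ℕ → Prop} {a b c : Finset ℕ} {T T₁ T₂ : ℕ}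

theorem left (h : Path p a b T) : p a := by cases h <;> assumption

theorem right (h : Path p a b T) : p b := by induction h <;> assumption

theorem eq_of_zero (h : Path p a b 0) : a = b := by cases h; rfl

theorem mono (h : Path p a b T) (hpq : ∀ c, p c → q c) : Path q a b T := by
  induction h with
  | nil ha => exact nil (hpq _ ha)
  | cons ha hs _ ih => exact cons (hpq _ ha) hs ih

theorem trans (h₁ : Path p a b T₁) (h₂ : Path p b c T₂) : Path p a c (T₁ + T₂) := by
  induction h₁ with
  | nil ha => simpa using h₂
  | cons ha hs _ ih =>
    have := cons ha hs (ih h₂)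
    rwa [show ∀ x y : ℕ, x + 1 + y = x + y + 1 by intros; omega]

theorem symm (h : Path p a b T) : Path p b a T := by
  induction h with
  | nil ha => exact nil ha
  | cons ha hs h' ih => exact ih.trans (cons h'.left hs.symm (nil ha))

/-- A path is carried along any map of configurations that turns each move into a move or an
equality. -/
theorem map (f : Finset ℕ → Finset ℕ)
    (hs : ∀ a b, p a → p b → Step a b → f a = f b ∨ Step (f a) (f b))
    (hq : ∀ c, p c → q (f c)) (h : Path p a b T) : ∃ T' ≤ T, Path q (f a) (f b) T' := by
  induction h with
  | nil ha => exact ⟨0, le_rfl, nil (hq _ ha)⟩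
  | cons ha hst h' ih =>
    obtain ⟨T', hT, hp⟩ := ih
    rcases hs _ _ ha h'.left hst with he | he
    · exact ⟨T', by omega, he ▸ hp⟩
    · exact ⟨T' + 1, by omega, cons (hq _ ha) he hp⟩

theorem low (x : ℕ) (h : Path p a b T) (hq : ∀ c, p c → q (low x c)) :
    ∃ T' ≤ T, Path q (Pebble.low x a) (Pebble.low x b) T' :=
  h.map _ (fun _ _ _ _ hs => hs.low x) hq

theorem split {x k : ℕ} (hxk : x ≤ k) (h : Path p a b T) (hq : ∀ c, p c → q (Pebble.low x c))
    (hr : ∀ c, p c → r (high k c)) :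
    ∃ T₁ T₂, T₁ + T₂ ≤ T ∧ Path q (Pebble.low x a) (Pebble.low x b) T₁ ∧
      Path r (high k a) (high k b) T₂ := by
  induction h with
  | nil ha => exact ⟨0, 0, le_rfl, nil (hq _ ha), nil (hr _ ha)⟩
  | cons ha hst h' ih =>
    obtain ⟨T₁, T₂, hT, h1, h2⟩ := ih
    rcases hst.split hxk with ⟨e1, e2 | e2⟩ | ⟨e1, e2⟩
    · exact ⟨T₁, T₂, by omega, e1 ▸ h1, e2 ▸ h2⟩
    · exact ⟨T₁, T₂ + 1, by omega, e1 ▸ h1, cons (hr _ ha) e2 h2⟩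
    · exact ⟨T₁ + 1, T₂, by omega, cons (hq _ ha) e1 h1, e2 ▸ h2⟩

theorem high (x : ℕ) (h : Path p a b T) (hq : ∀ c, p c → q (high x c)) :
    ∃ T' ≤ T, Path q (Pebble.high x a) (Pebble.high x b) T' := by
  obtain ⟨T₁, T₂, hT, -, h2⟩ := h.split (q := fun _ => True) (le_refl x) (fun _ _ => trivial) hq
  exact ⟨T₂, by omega, h2⟩

/-- Either no configuration of the path satisfies `R`, or the path is cut at the last configuration
`c` that does: `c` is the endpoint, or all configurations from its successor `d` on violate `R`. -/
theorem last (R : Finset ℕ → Prop) (h : Path p a b T) :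
    Path (fun c => p c ∧ ¬ R c) a b T ∨
    ∃ c T₁, R c ∧ Path p a c T₁ ∧ ((c = b ∧ T₁ = T) ∨
      ∃ d T₂, Step c d ∧ Path (fun c => p c ∧ ¬ R c) d b T₂ ∧ T₁ + 1 + T₂ = T) := by
  induction h with
  | @nil a ha =>
    by_cases hR : R a
    · exact Or.inr ⟨a, 0, hR, nil ha, Or.inl ⟨rfl, rfl⟩⟩
    · exact Or.inl (nil ⟨ha, hR⟩)
  | @cons a b c T ha hst h' ih =>
    rcases ih with ih | ⟨e, T₁, hR, h1, h2⟩
    · by_cases hR : R a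
      · exact Or.inr ⟨a, 0, hR, nil ha, Or.inr ⟨b, T, hst, ih, by omega⟩⟩
      · exact Or.inl (cons ⟨ha, hR⟩ hst ih)
    · refine Or.inr ⟨e, T₁ + 1, hR, cons ha hst h1, ?_⟩
      rcases h2 with ⟨h2, h3⟩ | ⟨d, T₂, h2, h3, h4⟩
      · exact Or.inl ⟨h2, by omega⟩
      · exact Or.inr ⟨d, T₂, h2, h3, by omega⟩

/-- A weaker form of `Path.last`, keeping the two halves of the path. -/
theorem cut (R : Finset ℕ → Prop) (h : Path p a b T) :
    Path (fun c => p c ∧ ¬ R c) a b T ∨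
    ∃ c T₁ T₂, R c ∧ Path p a c T₁ ∧ Path p c b T₂ ∧ T₁ + T₂ = T := by
  rcases h.last R with h | ⟨c, T₁, hR, h1, h2⟩
  · exact Or.inl h
  · refine Or.inr ⟨c, T₁, ?_⟩
    rcases h2 with ⟨rfl, h3⟩ | ⟨d, T₂, h2, h3, h4⟩
    · exact ⟨0, hR, h1, nil h1.right, by omega⟩
    · exact ⟨T₂ + 1, hR, h1, cons h1.right h2 (h3.mono fun _ h => h.1), by omega⟩

end Path

/-! ### Basic properties of `Reach` and the upper recursion -/

theorem low_singleton {x i : ℕ} (h : x < i) : low x {i} = ∅ := by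
  ext j; simp only [mem_low, mem_singleton, notMem_empty, iff_false]; omega

theorem low_singleton_of_le {x i : ℕ} (h : i ≤ x) : low x {i} = {i} := by
  ext j; simp only [mem_low, mem_singleton]; omega

theorem high_singleton {x i : ℕ} (h : x < i) : high x {i} = {i - x} := by
  ext j; simp only [mem_high, mem_singleton]; omega

theorem Ok.low {S : ℕ} {c : Finset ℕ} (h : Ok S c) (x : ℕ) : Ok S (low x c) :=
  ⟨fun h0 => h.1 (mem_low.1 h0).1, (card_low_le x c).trans h.2⟩

theorem Ok.high {S : ℕ} {c : Finset ℕ} (h : Ok S c) (x : ℕ) : Ok S (high x c) :=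
  ⟨fun h0 => absurd (mem_high.1 h0).1 (by omega), (card_high_le x c).trans h.2⟩

theorem Ok.mono {S S' : ℕ} {c : Finset ℕ} (h : Ok S c) (hS : S ≤ S') : Ok S' c :=
  ⟨h.1, h.2.trans hS⟩

theorem Path.reach {n S T : ℕ} (h : Path (Ok S) ∅ {n} T) : Reach n S T := ⟨T, le_rfl, h⟩

theorem Reach.le {n S T T' : ℕ} (h : Reach n S T) (hT : T ≤ T') : Reach n S T' := by
  obtain ⟨U, hU, h⟩ := h
  exact ⟨U, hU.trans hT, h⟩

theorem Reach.mono_space {n S S' T : ℕ} (h : Reach n S T) (hS : S ≤ S') : Reach n S' T := by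
  obtain ⟨U, hU, h⟩ := h
  exact ⟨U, hU, h.mono fun _ h => h.mono hS⟩

/-- The squares above `n - m` alone form a solution on `m` squares. -/
theorem Reach.anti {n m S T : ℕ} (h : Reach n S T) (hm : 1 ≤ m) (hmn : m ≤ n) : Reach m S T := by
  obtain ⟨U, hU, h⟩ := h
  obtain ⟨V, hV, h'⟩ := h.high (n - m) (fun _ h => h.high _)
  rw [high_empty, high_singleton (by omega), Nat.sub_sub_self hmn] at h'
  exact ⟨V, by omega, h'⟩

theorem Reach.one {S : ℕ} : Reach 1 (S + 1) 1 := by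
  refine ⟨1, le_rfl, Path.cons (by simp [Ok]) ⟨1, le_rfl, ?_, by simp, Or.inl rfl⟩
    (Path.nil (by simp [Ok]))⟩
  intro j hj
  simp [hj]

theorem Reach.space_pos {n S T : ℕ} (h : Reach n S T) : 1 ≤ S := by
  obtain ⟨U, -, h⟩ := h
  simpa using h.right.2

theorem Reach.time_pos {n S T : ℕ} (h : Reach n S T) : 1 ≤ T := by
  obtain ⟨U, hU, h⟩ := h
  rcases U with _ | U
  · exact absurd h.eq_of_zero.symm (singleton_ne_empty n)
  · omega

/-- With an additional pebble kept on a square `N > x`, a move still projects to a move or to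
nothing. -/
theorem Step.insert_low {a b : Finset ℕ} (h : Step a b) {x N : ℕ} (hx : x < N) :
    insert N (Pebble.low x a) = insert N (Pebble.low x b) ∨
      Step (insert N (Pebble.low x a)) (insert N (Pebble.low x b)) := by
  rcases h.low x with h | ⟨i, h1, h2, h3, h4⟩
  · left; rw [h]
  · right
    have hi : i ≠ N := by
      rintro rfl
      simp only [mem_low] at h3
      have : ¬ i ≤ x := by omega
      tauto
    refine ⟨i, h1, fun j hj => ?_, ?_, ?_⟩
    · simp [h2 j hj]
    · simp [h3, hi]
    · rcases h4 with h4 | h4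
      · exact Or.inl h4
      · exact Or.inr (mem_insert_of_mem h4)

theorem step_insert {a : Finset ℕ} {N : ℕ} (hN : 1 ≤ N) (h : N ∉ a) (h' : N = 1 ∨ N - 1 ∈ a) :
    Step a (insert N a) :=
  ⟨N, hN, fun j hj => by simp [hj], by simp [h], h'⟩

/-- A loop `∅ → c → ∅` with square `N - 1` pebbled at `c` yields a solution on `N` squares: place a
pebble on `N` at `c` and keep it. The return trip leaves one pebble less for the other squares. -/
theorem reach_of_loop {N r α β : ℕ} {c : Finset ℕ} (hN : 1 ≤ N) (hc : N = 1 ∨ N - 1 ∈ c)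
    (h₁ : Path (Ok (r + 1)) ∅ c α) (h₂ : Path (Ok r) c ∅ β) : Reach N (r + 1) (α + β + 1) := by
  obtain ⟨T₁, hT₁, p₁⟩ := h₁.low (N - 1) (fun _ h => h.low _)
  obtain ⟨T₂, hT₂, p₂⟩ := h₂.map (q := Ok (r + 1)) (fun c => insert N (low (N - 1) c))
    (fun _ _ _ _ hs => hs.insert_low (by omega)) (by
      intro c h
      refine ⟨?_, (card_insert_le _ _).trans (Nat.succ_le_succ (h.low _).2)⟩
      rw [mem_insert, not_or]
      exact ⟨by omega, (h.low _).1⟩)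
  rw [low_empty] at p₁
  have hs : Step (low (N - 1) c) (insert N (low (N - 1) c)) := by
    apply step_insert hN
    · rw [mem_low]; omega
    · rcases hc with hc | hc
      · exact Or.inl hc
      · exact Or.inr (mem_low.2 ⟨hc, le_rfl⟩)
  refine ⟨_, ?_, p₁.trans (Path.cons p₁.right hs p₂)⟩
  omega

/-- The upper recursion `F (m + N) (S + 1) ≤ F m (S + 1) + F m S + F N S`: pebble `m`, solve the
remaining `N` squares while `m` stays pebbled, then clear `m` while `m + N` stays pebbled. -/
theorem Reach.compose {m N S a b d : ℕ} (hm : 1 ≤ m) (hN : 1 ≤ N) (ha : Reach m (S + 1) a)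
    (hb : Reach m S b) (hd : Reach N S d) : Reach (m + N) (S + 1) (a + b + d) := by
  obtain ⟨a', ha', pa⟩ := ha
  obtain ⟨b', hb', pb⟩ := hb
  obtain ⟨d', hd', pd⟩ := hd
  obtain ⟨T₂, hT₂, p₂⟩ := pb.symm.map (q := Ok (S + 1)) (fun c => insert (m + N) (low m c))
    (fun _ _ _ _ hs => hs.insert_low (by omega)) (by
      intro c h
      refine ⟨?_, (card_insert_le _ _).trans (Nat.succ_le_succ (h.low _).2)⟩
      rw [mem_insert, not_or]
      exact ⟨by omega, (h.low _).1⟩)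
  obtain ⟨T₁, hT₁, p₁⟩ := pd.map (q := Ok (S + 1)) (fun c => insert m (c.image (· + m)))
    (by
      intro a b h0a h0b hs
      right
      obtain ⟨i, h1, h2, h3, h4⟩ := hs
      have key : ∀ (c : Finset ℕ), 0 ∉ c → ∀ j, j ∈ insert m (c.image (· + m)) ↔
          j = m ∨ (m < j ∧ j - m ∈ c) := by
        intro c hc j
        simp only [mem_insert, mem_image]
        constructor
        · rintro (h | ⟨l, hl, rfl⟩)
          · exact Or.inl h
          · refine Or.inr ⟨?_, by simpa using hl⟩
            rcases l with _ | l
            · exact absurd hl hc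
            · omega
        · rintro (h | ⟨h, h'⟩)
          · exact Or.inl h
          · exact Or.inr ⟨j - m, h', by omega⟩
      refine ⟨i + m, by omega, fun j hj => ?_, ?_, Or.inr ?_⟩
      · rw [key a h0a.1, key b h0b.1]
        by_cases hjm : m < j
        · rw [h2 (j - m) (by omega)]
        · tauto
      · rw [key a h0a.1, key b h0b.1]
        simp [h3, show i ≠ 0 by omega, show 0 < i by omega]
      · rw [key a h0a.1]
        rcases h4 with h4 | h4
        · left; omega
        · right
          rw [show i + m - 1 - m = i - 1 by omega]
          refine ⟨?_, h4⟩
          rcases Nat.eq_zero_or_pos (i - 1) with h0 | h0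
          · exact absurd (h0 ▸ h4) h0a.1
          · omega)
    (by
      intro c h
      refine ⟨?_, (card_insert_le _ _).trans (Nat.succ_le_succ (card_image_le.trans h.2))⟩
      simp only [mem_insert, mem_image, not_or]
      refine ⟨by omega, ?_⟩
      rintro ⟨l, hl, hlm⟩
      omega)
  rw [low_empty, low_singleton_of_le le_rfl] at p₂
  rw [image_empty, image_singleton] at p₁
  have e : (insert m {N + m} : Finset ℕ) = insert (m + N) {m} := by
    rw [Finset.pair_comm, Nat.add_comm]
  rw [e] at p₁
  exact ⟨_, by omega, (pa.trans p₁).trans p₂⟩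

/-! ### The lower recursion -/

/-- The configuration is empty or its minimum is at most `x`. -/
def Low (x : ℕ) (c : Finset ℕ) : Prop := c = ∅ ∨ ∃ i ∈ c, i ≤ x

/-- At most `u` pebbles lie on squares `≤ x` and at most `v` on squares `> k`; square `0` is empty. -/
def Pr (x k u v : ℕ) (c : Finset ℕ) : Prop :=
  0 ∉ c ∧ (low x c).card ≤ u ∧ (high k c).card ≤ v

/-- The time `T` is at least `F k (s + 1) + F k s + F (n - k) s` for some `1 ≤ k < n`. -/
def Dec (n s T : ℕ) : Prop :=
  ∃ k a b d, 1 ≤ k ∧ k < n ∧ Reach k (s + 1) a ∧ Reach k s b ∧ Reach (n - k) s d ∧ a + b + d ≤ T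

theorem Low.mono {x y : ℕ} {c : Finset ℕ} (h : Low x c) (hxy : x ≤ y) : Low y c := by
  rcases h with h | ⟨i, hi, hx⟩
  · exact Or.inl h
  · exact Or.inr ⟨i, hi, hx.trans hxy⟩

/-- If the minimum of `c` is exactly `x`, then `x` is the only pebble on the squares `≤ x`. -/
theorem low_eq_singleton {x : ℕ} {c : Finset ℕ} (hx : 1 ≤ x) (h : Low x c)
    (h' : ¬ Low (x - 1) c) : low x c = {x} := by
  simp only [Low, not_or, not_exists, not_and] at h'
  rcases h with h | ⟨i, hi, hix⟩
  · exact absurd h h'.1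
  · have : i = x := by have := h'.2 i hi; omega
    subst this
    ext j
    simp only [mem_low, mem_singleton]
    constructor
    · rintro ⟨h1, h2⟩
      have := h'.2 j h1
      omega
    · rintro rfl
      exact ⟨hi, le_rfl⟩

/-- Some pebble lies at or below `x` unless the board is empty, so the squares `> k ≥ x` hold at most
`s` of `s + 1` pebbles. -/
theorem Low.card_high {x k s : ℕ} {c : Finset ℕ} (h : Low x c) (hxk : x ≤ k)
    (hs : c.card ≤ s + 1) : (high k c).card ≤ s := by
  rcases h with rfl | ⟨i, hi, hix⟩
  · simp [high_empty]
  · have h1 := card_low_add_high_le hxk c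
    have h2 : 0 < (low x c).card := card_pos.2 ⟨i, mem_low.2 ⟨hi, hix⟩⟩
    omega

/-- Let `a → c → ∅` be a journey passing through a configuration `z` with `low x z = {x}`. The
projection to the squares `≤ x` yields two paths between `{x}` and the ends of the journey, the
projection to the squares `> k` yields the projected journey, and the lengths add up to at most
`T₁ + T₂`. The first alternative has `z` on the way from `a` to `c`, the second on the way from `c`
to `∅`. The bounds are such that after `z` the squares `≤ x` hold at most `r + 1` pebbles, and from
`c` on the squares `> k` hold at most `r`. -/
theorem two_seg {x k s₁ r T₁ T₂ : ℕ} {a c : Finset ℕ} (hxk : x ≤ k) (hs : r + 1 ≤ s₁)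
    (H : (∃ z t₁ t₂, low x z = {x} ∧ t₁ + t₂ ≤ T₁ ∧ Path (Pr x k s₁ (r + 1)) a z t₁ ∧
          Path (Pr x k (r + 1) (r + 1)) z c t₂ ∧ Path (Pr x k (r + 1) r) c ∅ T₂) ∨
        (∃ z t₁ t₂, low x z = {x} ∧ t₁ + t₂ ≤ T₂ ∧ Path (Pr x k s₁ (r + 1)) a c T₁ ∧
          Path (Pr x k (r + 1) r) c z t₁ ∧ Path (Pr x k (r + 1) r) z ∅ t₂)) :
    ∃ u₁ u₂ α β, u₁ + u₂ + α + β ≤ T₁ + T₂ ∧ Path (Ok s₁) (low x a) {x} u₁ ∧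
      Path (Ok (r + 1)) {x} ∅ u₂ ∧ Path (Ok (r + 1)) (high k a) (high k c) α ∧
      Path (Ok r) (high k c) ∅ β := by
  have hl : ∀ u v w, u ≤ w → ∀ c, Pr x k u v c → Ok w (low x c) := fun u v w hw c h =>
    ⟨fun h0 => h.1 (mem_low.1 h0).1, h.2.1.trans hw⟩
  have hh : ∀ u v, ∀ c, Pr x k u v c → Ok v (high k c) := fun u v c h =>
    ⟨fun h0 => absurd (mem_high.1 h0).1 (by omega), h.2.2⟩
  rcases H with ⟨z, t₁, t₂, hz, ht, p1, p2, p3⟩ | ⟨z, t₁, t₂, hz, ht, p1, p2, p3⟩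
  · obtain ⟨a1, b1, e1, l1, h1⟩ := p1.split hxk (hl _ _ _ le_rfl) (hh _ _)
    obtain ⟨a2, b2, e2, l2, h2⟩ := p2.split hxk (hl _ _ _ le_rfl) (hh _ _)
    obtain ⟨a3, b3, e3, l3, h3⟩ := p3.split hxk (hl _ _ _ le_rfl) (hh _ _)
    rw [hz] at l1 l2
    exact ⟨_, _, _, _, by omega, l1, l2.trans l3, h1.trans h2, h3⟩
  · obtain ⟨a1, b1, e1, l1, h1⟩ := p1.split hxk (hl _ _ _ le_rfl) (hh _ _)
    obtain ⟨a2, b2, e2, l2, h2⟩ := p2.split hxk (hl _ _ _ hs) (hh _ _)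
    obtain ⟨a3, b3, e3, l3, h3⟩ := p3.split hxk (hl _ _ _ le_rfl) (hh _ _)
    rw [hz] at l2 l3
    exact ⟨_, _, _, _, by omega, l1.trans l2, l3, h1, h2.trans h3⟩

/-- A configuration on the board `{1, …, N}` with at most `S` pebbles. -/
def Bd (N S : ℕ) (c : Finset ℕ) : Prop := Ok S c ∧ ∀ i ∈ c, i ≤ N

set_option maxHeartbeats 1600000 in
/-- The lower recursion for loops: a loop `∅ → c → ∅` on `N` squares with `N ∈ c`, using at most
`r + 2` pebbles on the way to `c` and at most `r + 1` on the way back, is at least as long as some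
right-hand side of the recursion for `N + 1` minus `1`. The proof is by strong induction on the
length of the first half; `IH` is the lower recursion on fewer squares. -/
theorem loop_lower (N r : ℕ)
    (IH : ∀ M, 2 ≤ M → M ≤ N → ∀ T, Reach M (r + 2) T → Dec M (r + 1) T) (c : Finset ℕ)
    (hc : N ∈ c) (T₂ : ℕ) (B : Path (Bd N (r + 1)) c ∅ T₂) :
    ∀ T₁, Path (Bd N (r + 2)) ∅ c T₁ → Dec (N + 1) (r + 1) (T₁ + T₂ + 1) := by
  intro T₁
  induction T₁ using Nat.strong_induction_on with
  | _ T₁ ihT =>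
  intro A
  have hc0 : 0 ∉ c := A.right.1.1
  have hcne : c ≠ ∅ := fun h => by simp [h] at hc
  -- `M` is the largest minimum of a nonempty configuration of the loop.
  have hex : ∃ x, Path (fun c => Bd N (r + 2) c ∧ Low x c) ∅ c T₁ ∧
      Path (fun c => Bd N (r + 1) c ∧ Low x c) c ∅ T₂ := by
    have : ∀ S c, Bd N S c → Bd N S c ∧ Low N c := by
      intro S c h
      refine ⟨h, ?_⟩
      rcases c.eq_empty_or_nonempty with h0 | ⟨i, hi⟩
      · exact Or.inl h0
      · exact Or.inr ⟨i, hi, h.2 i hi⟩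
    exact ⟨N, A.mono (this _), B.mono (this _)⟩
  classical
  obtain ⟨M, ⟨A', B'⟩, hmin⟩ : ∃ M, (Path (fun c => Bd N (r + 2) c ∧ Low M c) ∅ c T₁ ∧
      Path (fun c => Bd N (r + 1) c ∧ Low M c) c ∅ T₂) ∧ ∀ x < M,
      ¬ (Path (fun c => Bd N (r + 2) c ∧ Low x c) ∅ c T₁ ∧
      Path (fun c => Bd N (r + 1) c ∧ Low x c) c ∅ T₂) :=
    ⟨Nat.find hex, Nat.find_spec hex, fun x hx => Nat.find_min hex hx⟩
  have hM1 : 1 ≤ M := by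
    rcases A'.right.2 with h | ⟨i, hi, hiM⟩
    · exact absurd h hcne
    · rcases i with _ | i
      · exact absurd hi hc0
      · omega
  have hMN : M ≤ N := by
    by_contra hlt
    have hlt : N < M := by omega
    refine hmin N hlt ?_
    have : ∀ S c, Bd N S c → Bd N S c ∧ Low N c := by
      intro S c h
      refine ⟨h, ?_⟩
      rcases c.eq_empty_or_nonempty with h0 | ⟨i, hi⟩
      · exact Or.inl h0
      · exact Or.inr ⟨i, hi, h.2 i hi⟩
    exact ⟨A.mono (this _), B.mono (this _)⟩
  -- Any bound `x` for the minima saves one pebble on the squares above `k ≥ x`.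
  have capA : ∀ x k c, x ≤ k → Bd N (r + 2) c → Low x c → Pr x k (r + 2) (r + 1) c :=
    fun x k c hxk h hL => ⟨h.1.1, (card_low_le _ _).trans h.1.2, hL.card_high hxk h.1.2⟩
  have capB : ∀ x k c, x ≤ k → Bd N (r + 1) c → Low x c → Pr x k (r + 1) r c :=
    fun x k c hxk h hL => ⟨h.1.1, (card_low_le _ _).trans h.1.2, hL.card_high hxk h.1.2⟩
  -- Two paths from `∅` to `{k}` and a loop on the squares above `k` give a decomposition.
  have fin : ∀ k u₁ u₂ α β, 1 ≤ k → k ≤ N → Reach k (r + 2) u₁ → Reach k (r + 1) u₂ →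
      Path (Ok (r + 1)) ∅ (high k c) α → Path (Ok r) (high k c) ∅ β →
      u₁ + u₂ + α + β ≤ T₁ + T₂ → Dec (N + 1) (r + 1) (T₁ + T₂ + 1) := by
    intro k u₁ u₂ α β hk hkN h1 h2 h3 h4 hle
    refine ⟨k, u₁, u₂, α + β + 1, hk, by omega, h1, h2, reach_of_loop (by omega) ?_ h3 h4,
      by omega⟩
    rcases Nat.eq_or_lt_of_le hkN with h | h
    · left; omega
    · right
      rw [mem_high]
      refine ⟨by omega, ?_⟩
      rwa [show N + 1 - k - 1 + k = N by omega]
  have finM : _ → Dec (N + 1) (r + 1) (T₁ + T₂ + 1) := fun H => by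
    obtain ⟨u₁, u₂, α, β, hle, h1, h2, h3, h4⟩ :=
      two_seg (x := M) (k := M) (s₁ := r + 2) (r := r) (T₁ := T₁) (T₂ := T₂) (a := ∅) (c := c)
        le_rfl (by omega) H
    exact fin M u₁ u₂ α β hM1 hMN h1.reach h2.symm.reach h3 h4 hle
  -- If the minimum `M` is attained on the way back, split at `M`.
  rcases B'.cut (fun c => ¬ Low (M - 1) c) with BM | ⟨z, t₁, t₂, hz, p1, p2, ht⟩
  swap
  · exact finM (Or.inr ⟨z, t₁, t₂, low_eq_singleton hM1 p1.right.2 hz, ht.le,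
      A'.mono fun c h => capA M M c le_rfl h.1 h.2, p1.mono fun c h => capB M M c le_rfl h.1 h.2,
      p2.mono fun c h => capB M M c le_rfl h.1 h.2⟩)
  have BM' : Path (fun c => Bd N (r + 1) c ∧ Low (M - 1) c) c ∅ T₂ :=
    BM.mono fun c h => ⟨h.1.1, not_not.1 h.2⟩
  -- Otherwise let `z` be the last configuration of the first half whose minimum is `M`.
  rcases A'.last (fun c => ¬ Low (M - 1) c) with h | ⟨z, t₁, hz, A1, hA2⟩
  · exact absurd ⟨h.mono fun c h => ⟨h.1.1, not_not.1 h.2⟩, BM'⟩ (hmin (M - 1) (by omega))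
  have hzM : low M z = {M} := low_eq_singleton hM1 A1.right.2 hz
  have finA : ∀ t₂, t₁ + t₂ ≤ T₁ → Path (Pr M M (r + 1) (r + 1)) z c t₂ →
      Dec (N + 1) (r + 1) (T₁ + T₂ + 1) := fun t₂ ht p2 =>
    finM (Or.inl ⟨z, t₁, t₂, hzM, ht, A1.mono fun c h => capA M M c le_rfl h.1 h.2, p2,
      B'.mono fun c h => (capB M M c le_rfl h.1 h.2).imp id (And.imp id (by omega))⟩)
  have hzPr : Pr M M (r + 1) (r + 1) z :=
    ⟨A1.right.1.1.1, by simp [hzM], (capA M M z le_rfl A1.right.1 A1.right.2).2.2⟩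
  rcases hA2 with ⟨rfl, ht⟩ | ⟨z₁, t₂, hzz, A2, ht⟩
  · exact finA 0 (by omega) (Path.nil hzPr)
  -- If a square above `M` is pebbled at all times after `z`, then the squares `≤ M` hold at most
  -- `r + 1` pebbles there, and splitting at `M` works again. Otherwise let `y` be the last
  -- configuration after `z` with no pebble above `M`.
  rcases A2.last (fun c => ∀ i ∈ c, i ≤ M) with h | ⟨y, t₃, hy, A3, hA4⟩
  · refine finA (t₂ + 1) (by omega) (Path.cons hzPr hzz (h.mono fun c h => ?_))
    obtain ⟨⟨⟨h1, h2⟩, -⟩, h3⟩ := h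
    push Not at h3
    obtain ⟨i, hi, hiM⟩ := h3
    have := card_low_lt hi hiM
    have := h1.1.2
    exact ⟨h1.1.1, by omega, (capA M M c le_rfl h1 h2).2.2⟩
  -- `M ∈ y` because the next move places a pebble on `M + 1`, or because `y = c` and `M = N`.
  have hMy : M ∈ y := by
    rcases hA4 with ⟨rfl, -⟩ | ⟨y₁, t₄, hs, p, -⟩
    · have := hy N hc
      rwa [show M = N by omega]
    · obtain ⟨i, h1, h2, h3, h4⟩ := hs
      have h5 := p.left.2
      push Not at h5
      obtain ⟨l, hl, hlM⟩ := h5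
      have hly : l ∉ y := fun h => by have := hy l h; omega
      have : l = i := by
        by_contra hne
        exact hly ((h2 l hne).2 hl)
      subst this
      rcases h4 with h4 | h4
      · omega
      · have := hy _ h4
        rwa [show M = l - 1 by omega]
  obtain ⟨t₄, ht4, A4⟩ : ∃ t₄, t₃ + t₄ = t₂ ∧
      Path (fun c => (Bd N (r + 2) c ∧ Low (M - 1) c) ∧ ∃ i ∈ c, M ≤ i) y c t₄ := by
    have hyP : (Bd N (r + 2) y ∧ Low (M - 1) y) ∧ ∃ i ∈ y, M ≤ i :=
      ⟨⟨A3.right.1.1, not_not.1 A3.right.2⟩, M, hMy, le_rfl⟩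
    rcases hA4 with ⟨rfl, h⟩ | ⟨y₁, t₄, hs, p, h⟩
    · exact ⟨0, by omega, Path.nil hyP⟩
    · refine ⟨t₄ + 1, by omega, Path.cons hyP hs (p.mono fun c h => ?_)⟩
      obtain ⟨⟨⟨h1, -⟩, h2⟩, h3⟩ := h
      push Not at h3
      obtain ⟨i, hi, hiM⟩ := h3
      exact ⟨⟨h1, not_not.1 h2⟩, i, hi, hiM.le⟩
  have A3' : Path (Bd N (r + 2)) z y (t₃ + 1) :=
    Path.cons A1.right.1 hzz (A3.mono fun c h => h.1.1)
  have hyM : low M y = y := by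
    ext j
    rw [mem_low]
    exact ⟨fun h => h.1, fun h => ⟨h, hy j h⟩⟩
  have Bdlow : ∀ S c x, Bd N S c → Bd N S (low x c) := fun S c x h =>
    ⟨h.1.low x, fun i hi => h.2 i (mem_low.1 hi).1⟩
  -- `u` is the last configuration between `z` and `y` in which `M` is not pebbled, if there is one.
  rcases A3'.last (fun c => M ∉ c) with A5 | ⟨u, t₅, hu, A5, hA6⟩
  swap
  · -- Up to `u`, the pebbles on the squares `≥ M` can be omitted, and from `u` to `y` those above
    -- `M`. At least one move is saved, since `M ∈ z`, so the induction on the length applies.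
    rcases hA6 with ⟨rfl, -⟩ | ⟨v, t₆, hs, A6, ht6⟩
    · exact absurd hMy hu
    obtain ⟨a₁, b₁, e₁, l₁, h₁⟩ := A1.split (q := Bd N (r + 2)) (r := fun _ => True)
      (x := M - 1) (k := M - 1) le_rfl (fun c h => Bdlow _ _ _ h.1) (fun _ _ => trivial)
    have hb : 1 ≤ b₁ := by
      rcases b₁ with _ | b₁
      · exfalso
        have hMz : 1 ∈ high (M - 1) z := by
          rw [mem_high, show 1 + (M - 1) = M by omega]
          refine ⟨le_rfl, ?_⟩
          have : M ∈ low M z := by simp [hzM]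
          exact (mem_low.1 this).1
        rw [high_empty] at h₁
        simp [← h₁.eq_of_zero] at hMz
      · omega
    obtain ⟨a₂, e₂, l₂⟩ := A5.low (q := Bd N (r + 2)) (M - 1) (fun c h => Bdlow _ _ _ h)
    obtain ⟨a₃, e₃, l₃⟩ := A6.low (q := Bd N (r + 2)) M (fun c h => Bdlow _ _ _ h.1)
    have hlu : low (M - 1) u = low M u := by
      ext j
      simp only [mem_low]
      constructor
      · rintro ⟨h1, h2⟩; exact ⟨h1, by omega⟩
      · rintro ⟨h1, h2⟩
        have : j ≠ M := by rintro rfl; exact hu h1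
        exact ⟨h1, by omega⟩
    have hvM : M ∈ low M v := mem_low.2 ⟨not_not.1 A6.left.2, le_rfl⟩
    have hstep : Step (low (M - 1) u) (low M v) := by
      rw [hlu]
      rcases hs.low M with h | h
      · rw [← h] at hvM
        exact absurd (mem_low.1 hvM).1 hu
      · exact h
    rw [hyM] at l₃
    rw [low_empty] at l₁
    have new := (l₁.trans l₂).trans
      (Path.cons l₂.right hstep (l₃.trans (A4.mono fun c h => h.1.1)))
    obtain ⟨k, a, b, d, h1, h2, h3, h4, h5, h6⟩ := ihT _ (by omega) new
    exact ⟨k, a, b, d, h1, h2, h3, h4, h5, by omega⟩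
  -- Now `M` is pebbled from `z` to `y`. As `z` restricts to `{M}`, the path up to `z` costs at least
  -- `F M (r + 2)`, which is split at some `j` by `IH`. In the rest of the loop, `x` is the largest
  -- minimum, where the pebble on `M` is disregarded between `z` and `y`.
  obtain ⟨e₁, he₁, E1⟩ := A5.low (q := fun c => Bd N (r + 2) c ∧ M ∈ c ∧ ∀ i ∈ c, i ≤ M) M
    (fun c h => ⟨Bdlow _ _ _ h.1, mem_low.2 ⟨not_not.1 h.2, le_rfl⟩, fun i hi => (mem_low.1 hi).2⟩)
  rw [hzM, hyM] at E1
  let Q : ℕ → Prop := fun x =>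
    Path (fun c => (Bd N (r + 2) c ∧ M ∈ c ∧ ∀ i ∈ c, i ≤ M) ∧ Low x (c.erase M)) {M} y e₁ ∧
    Path (fun c => (Bd N (r + 2) c ∧ ∃ i ∈ c, M ≤ i) ∧ Low x c) y c t₄ ∧
    Path (fun c => Bd N (r + 1) c ∧ Low x c) c ∅ T₂
  have hQ : Q (M - 1) := by
    refine ⟨E1.mono fun c h => ⟨h, ?_⟩, A4.mono fun c h => ⟨⟨h.1.1, h.2⟩, h.1.2⟩, BM'⟩
    rcases (c.erase M).eq_empty_or_nonempty with h0 | ⟨i, hi⟩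
    · exact Or.inl h0
    · refine Or.inr ⟨i, hi, ?_⟩
      have h1 := h.2.2 i (mem_of_mem_erase hi)
      have h2 := ne_of_mem_erase hi
      omega
  have hexQ : ∃ x, Q x := ⟨_, hQ⟩
  obtain ⟨x, hxM, ⟨E1x, E2x, Bx⟩, hxmin⟩ : ∃ x, x ≤ M - 1 ∧ Q x ∧ ∀ w < x, ¬ Q w :=
    ⟨Nat.find hexQ, Nat.find_min' hexQ hQ, Nat.find_spec hexQ, fun w hw => Nat.find_min hexQ hw⟩
  have hx1 : 1 ≤ x := by
    rcases E2x.right.2 with h | ⟨i, hi, hix⟩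
    · exact absurd h hcne
    · rcases i with _ | i
      · exact absurd hi hc0
      · omega
  obtain ⟨f, hf, A1M⟩ := A1.low (q := Ok (r + 2)) M (fun c h => h.1.1.low M)
  rw [low_empty, hzM] at A1M
  obtain ⟨j, a, b, d, hj1, hjM, ha, hb, hd, hsum⟩ := IH M (by omega) hMN f A1M.reach
  have capE1 : ∀ k c, x ≤ k → (Bd N (r + 2) c ∧ M ∈ c ∧ ∀ i ∈ c, i ≤ M) ∧ Low x (c.erase M) →
      Pr x k (r + 1) (r + 1) c := by
    rintro k c hk ⟨⟨h1, h2, h3⟩, h4⟩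
    have h5 := card_low_lt h2 (show x < M by omega)
    have h6 := h1.1.2
    refine ⟨h1.1.1, by omega, ?_⟩
    rcases h4 with h4 | ⟨i, hi, hix⟩
    · have h7 := card_high_le k c
      have h8 := card_erase_of_mem h2
      rw [h4, card_empty] at h8
      omega
    · exact Low.card_high (Or.inr ⟨i, mem_of_mem_erase hi, hix⟩) hk h6
  have capE2 : ∀ k c, x ≤ k → (Bd N (r + 2) c ∧ ∃ i ∈ c, M ≤ i) ∧ Low x c →
      Pr x k (r + 1) (r + 1) c := by
    rintro k c hk ⟨⟨h1, i, h2, h3⟩, h4⟩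
    have h5 := card_low_lt h2 (show x < i by omega)
    have h6 := h1.1.2
    exact ⟨h1.1.1, by omega, h4.card_high hk h6⟩
  -- From `z` on the pebble on `M`, or one above it, takes one pebble from the squares `≤ x`, so going
  -- to the minimum `x` and back costs `F x (r + 1)` twice, in addition to the moves above `k`.
  have key : ∀ k, x ≤ k → ∃ u₁ u₂ α β, u₁ + u₂ + α + β ≤ (e₁ + t₄) + T₂ ∧
      Path (Ok (r + 1)) (low x {M}) {x} u₁ ∧ Path (Ok (r + 1)) {x} ∅ u₂ ∧
      Path (Ok (r + 1)) (high k {M}) (high k c) α ∧ Path (Ok r) (high k c) ∅ β := by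
    intro k hk
    apply two_seg hk le_rfl
    have F1 := E1x.mono fun c h => capE1 k c hk h
    have F2 := E2x.mono fun c h => capE2 k c hk h
    have F3 := Bx.mono fun c h => capB x k c hk h.1 h.2
    rcases E1x.cut (fun c => ¬ Low (x - 1) (c.erase M)) with G1 | ⟨z', s₁, s₂, hz', q1, q2, hs⟩
    swap
    · refine Or.inl ⟨z', s₁, s₂ + t₄, ?_, by omega, q1.mono fun c h => capE1 k c hk h,
        (q2.mono fun c h => capE1 k c hk h).trans F2, F3⟩
      rw [← low_eq_singleton hx1 q1.right.2 hz']
      ext i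
      simp only [mem_low, mem_erase]
      have : i ≤ x → i ≠ M := by omega
      tauto
    rcases E2x.cut (fun c => ¬ Low (x - 1) c) with G2 | ⟨z', s₁, s₂, hz', q1, q2, hs⟩
    swap
    · exact Or.inl ⟨z', e₁ + s₁, s₂, low_eq_singleton hx1 q1.right.2 hz', by omega,
        F1.trans (q1.mono fun c h => capE2 k c hk h), q2.mono fun c h => capE2 k c hk h, F3⟩
    rcases Bx.cut (fun c => ¬ Low (x - 1) c) with G3 | ⟨z', s₁, s₂, hz', q1, q2, hs⟩
    swap
    · exact Or.inr ⟨z', s₁, s₂, low_eq_singleton hx1 q1.right.2 hz', by omega, F1.trans F2,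
        q1.mono fun c h => capB x k c hk h.1 h.2, q2.mono fun c h => capB x k c hk h.1 h.2⟩
    exact absurd ⟨G1.mono fun c h => ⟨h.1.1, not_not.1 h.2⟩,
      G2.mono fun c h => ⟨h.1.1, not_not.1 h.2⟩, G3.mono fun c h => ⟨h.1.1, not_not.1 h.2⟩⟩
      (hxmin (x - 1) (by omega))
  -- The splitting point is `max j x`.
  rcases le_or_gt x j with hxj | hjx
  · obtain ⟨u₁, u₂, α, β, hle, -, -, h3, h4⟩ := key j hxj
    rw [high_singleton hjM] at h3
    obtain ⟨d', hd', pd⟩ := hd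
    exact fin j a b (d' + α) β hj1 (by omega) ha hb (pd.trans h3) h4 (by omega)
  · obtain ⟨u₁, u₂, α, β, hle, h1, h2, h3, h4⟩ := key x le_rfl
    rw [high_singleton (by omega)] at h3
    rw [low_singleton (by omega)] at h1
    obtain ⟨d', hd', pd⟩ := hd.anti (m := M - x) (by omega) (by omega)
    exact fin x u₁ u₂ (d' + α) β hx1 (by omega) (h1.reach.mono_space (by omega)) h2.symm.reach
      (pd.trans h3) h4 (by omega)

/-- The lower recursion: `F n (s + 1)` is at least `F k (s + 1) + F k s + F (n - k) s` for some
`1 ≤ k < n`. The last placement of a pebble on `n` turns a solution into a loop on `n - 1` squares,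
with one pebble less available on the way back, to which `loop_lower` applies. -/
theorem Reach.decompose {n : ℕ} : ∀ {s T : ℕ}, 2 ≤ n → Reach n (s + 1) T → Dec n s T := by
  induction n using Nat.strong_induction_on with
  | _ n ih =>
  intro s T hn h
  obtain ⟨T', hT', p⟩ := h
  rcases p.last (fun c => n ∉ c) with q | ⟨u, t, hu, p1, h2⟩
  · exact absurd q.left.2 (by simp)
  rcases h2 with ⟨rfl, -⟩ | ⟨v, t₂, hs, p2, ht⟩
  · simp at hu
  have hv : n ∈ v := not_not.1 p2.left.2
  have hn1 : n - 1 ∈ u ∧ ∀ j, j ≠ n → (j ∈ u ↔ j ∈ v) := by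
    obtain ⟨i, h1, h2, h3, h4⟩ := hs
    have : i = n := by
      by_contra hne
      exact hu ((h2 n (Ne.symm hne)).2 hv)
    subst this
    exact ⟨h4.resolve_left (by omega), h2⟩
  have huv : low (n - 1) v = low (n - 1) u := by
    ext j
    simp only [mem_low]
    refine and_congr_left fun hj => (hn1.2 j (by omega)).symm
  obtain ⟨T₁, hT₁, A⟩ := p1.low (q := Bd (n - 1) (s + 1)) (n - 1)
    (fun c h => ⟨h.low _, fun i hi => (mem_low.1 hi).2⟩)
  obtain ⟨T₂, hT₂, B⟩ := p2.low (q := Bd (n - 1) s) (n - 1) (fun c h => by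
    refine ⟨⟨(h.1.low _).1, ?_⟩, fun i hi => (mem_low.1 hi).2⟩
    have h1 := card_low_lt (not_not.1 h.2) (show n - 1 < n by omega)
    have h2 := h.1.2
    omega)
  rw [huv, low_singleton (by omega)] at B
  rw [low_empty] at A
  have hc : n - 1 ∈ low (n - 1) u := mem_low.2 ⟨hn1.1, le_rfl⟩
  obtain ⟨r, rfl⟩ : ∃ r, s = r + 1 := by
    have h1 := B.left.1.2
    have h2 : 0 < (low (n - 1) u).card := card_pos.2 ⟨_, hc⟩
    exact ⟨s - 1, by omega⟩
  obtain ⟨k, a, b, d, h1, h2, h3, h4, h5, h6⟩ := loop_lower (n - 1) r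
    (fun M hM hMn T hT => ih M (by omega) hM hT) _ hc T₂ B T₁ A
  rw [Nat.sub_add_cancel (by omega)] at h2 h5
  exact ⟨k, a, b, d, h1, h2, h3, h4, h5, by omega⟩

/-- `Reach.decompose` with the number of pebbles written as `s + 2`. -/
theorem Reach.decompose' {n S T : ℕ} (hn : 2 ≤ n) (h : Reach n S T) :
    ∃ s m k a b d, S = s + 2 ∧ n = m + k ∧ 1 ≤ m ∧ 1 ≤ k ∧ Reach m (s + 2) a ∧
      Reach m (s + 1) b ∧ Reach k (s + 1) d ∧ a + b + d ≤ T := by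
  have h1 := h.space_pos
  obtain ⟨s, rfl⟩ : ∃ s, S = s + 1 := ⟨S - 1, by omega⟩
  obtain ⟨k, a, b, d, hk, hkn, ha, hb, hd, hle⟩ := h.decompose hn
  have h2 := hb.space_pos
  obtain ⟨r, rfl⟩ : ∃ r, s = r + 1 := ⟨s - 1, by omega⟩
  exact ⟨r, k, n - k, a, b, d, rfl, by omega, hk, by omega, ha, hb, hd, hle⟩

/-! ### Convexity -/

theorem Reach.two {S : ℕ} : Reach 2 (S + 2) 3 :=
  Reach.compose (m := 1) (N := 1) le_rfl le_rfl Reach.one Reach.one Reach.one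

/-- `F n S + 2 ≤ F (n + 1) S`. -/
theorem Reach.drop {n : ℕ} : ∀ {S T : ℕ}, 1 ≤ n → Reach (n + 1) S T →
    ∃ T', Reach n S T' ∧ T' + 2 ≤ T := by
  induction n using Nat.strong_induction_on with
  | _ n ih =>
  intro S T hn h
  obtain ⟨s, m, k, a, b, d, rfl, hnk, hm, hk, ha, hb, hd, hle⟩ := h.decompose' (by omega)
  rcases Nat.eq_or_lt_of_le hm with rfl | hm
  · have h1 := ha.time_pos
    have h2 := hb.time_pos
    exact ⟨d, (show n = k by omega) ▸ hd.mono_space (by omega), by omega⟩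
  · obtain ⟨m', rfl⟩ : ∃ m', m = m' + 1 := ⟨m - 1, by omega⟩
    obtain ⟨a', ha', hle'⟩ := ih m' (by omega) (by omega) ha
    refine ⟨a' + b + d, ?_, by omega⟩
    rw [show n = m' + k by omega]
    exact ha'.compose (by omega) hk (hb.anti (by omega) (by omega)) hd

/-- Convexity of `F · S`: moving the arguments `x` and `y` towards each other by one does not
increase `F x S + F y S`. Decompose `x = m₀ + k₀` and `y = m₁ + k₁`. If `m₀ + 2 ≤ m₁` or
`k₀ + 2 ≤ k₁`, convexity applies to these parts; otherwise `m₁ = m₀ + 1` and `k₁ = k₀ + 1`, and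
exchanging the parts suffices. -/
theorem Reach.convex {S : ℕ} : ∀ {y x u v : ℕ}, 1 ≤ x → x + 2 ≤ y → Reach x S u → Reach y S v →
    ∃ u' v', Reach (x + 1) S u' ∧ Reach (y - 1) S v' ∧ u' + v' ≤ u + v := by
  induction S with
  | zero => intro y x u v _ _ h; have := h.space_pos; omega
  | succ S ihS =>
  intro y
  induction y using Nat.strong_induction_on with
  | _ y ihy =>
  intro x u v hx hxy hu hv
  rcases Nat.eq_or_lt_of_le hx with rfl | hx2
  · obtain ⟨y, rfl⟩ : ∃ y', y = y' + 1 := ⟨y - 1, by omega⟩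
    obtain ⟨v', hv', hle⟩ := hv.drop (by omega)
    obtain ⟨s, -, -, -, -, -, hs, -⟩ := hv.decompose' (by omega)
    obtain rfl : S = s + 1 := by omega
    have := hu.time_pos
    exact ⟨3, v', Reach.two, hv', by omega⟩
  obtain ⟨s, m₀, k₀, a₀, b₀, d₀, hs, rfl, hm₀, hk₀, ha₀, hb₀, hd₀, hle₀⟩ := hu.decompose' hx2
  obtain rfl : S = s + 1 := by omega
  obtain ⟨s', m₁, k₁, a₁, b₁, d₁, hs', rfl, hm₁, hk₁, ha₁, hb₁, hd₁, hle₁⟩ :=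
    hv.decompose' (by omega)
  obtain rfl : s = s' := by omega
  by_cases hm : m₀ + 2 ≤ m₁
  · obtain ⟨a₂, a₃, ha₂, ha₃, hla⟩ := ihy m₁ (by omega) hm₀ hm ha₀ ha₁
    obtain ⟨b₂, b₃, hb₂, hb₃, hlb⟩ := ihS hm₀ hm hb₀ hb₁
    refine ⟨a₂ + b₂ + d₀, a₃ + b₃ + d₁, ?_, ?_, by omega⟩
    · rw [show m₀ + k₀ + 1 = (m₀ + 1) + k₀ by omega]
      exact ha₂.compose (by omega) hk₀ hb₂ hd₀
    · rw [show m₁ + k₁ - 1 = (m₁ - 1) + k₁ by omega]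
      exact ha₃.compose (by omega) hk₁ hb₃ hd₁
  by_cases hk : k₀ + 2 ≤ k₁
  · obtain ⟨d₂, d₃, hd₂, hd₃, hld⟩ := ihS hk₀ hk hd₀ hd₁
    refine ⟨a₀ + b₀ + d₂, a₁ + b₁ + d₃, ?_, ?_, by omega⟩
    · rw [show m₀ + k₀ + 1 = m₀ + (k₀ + 1) by omega]
      exact ha₀.compose (by omega) (by omega) hb₀ hd₂
    · rw [show m₁ + k₁ - 1 = m₁ + (k₁ - 1) by omega]
      exact ha₁.compose (by omega) (by omega) hb₁ hd₃
  · obtain rfl : m₁ = m₀ + 1 := by omega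
    obtain rfl : k₁ = k₀ + 1 := by omega
    refine ⟨a₁ + b₁ + d₀, a₀ + b₀ + d₁, ?_, ?_, by omega⟩
    · rw [show m₀ + k₀ + 1 = (m₀ + 1) + k₀ by omega]
      exact ha₁.compose (by omega) hk₀ hb₁ hd₀
    · rw [show m₀ + 1 + (k₀ + 1) - 1 = m₀ + (k₀ + 1) by omega]
      exact ha₀.compose hm₀ hk₁ hb₀ hd₁

/-! ### From `Reach` back to `F` and `Δ` -/

/-- `Step` agrees with the moves of `PebbleSolution` on configurations avoiding square `0`. -/
theorem step_iff {a b : Finset ℕ} (ha : 0 ∉ a) (hb : 0 ∉ b) :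
    Step a b ↔ ∃ i, symmDiff a b = {i} ∧ (i = 1 ∨ i - 1 ∈ a) := by
  constructor
  · rintro ⟨i, h1, h2, h3, h4⟩
    refine ⟨i, ?_, h4⟩
    ext j
    rw [mem_symmDiff, mem_singleton]
    by_cases hj : j = i
    · subst hj; tauto
    · have := h2 j hj; tauto
  · rintro ⟨i, h1, h2⟩
    have key : ∀ j, (j ∈ a ∧ j ∉ b ∨ j ∈ b ∧ j ∉ a) ↔ j = i := fun j => by
      rw [← mem_symmDiff, h1, mem_singleton]
    refine ⟨i, ?_, fun j hj => ?_, ?_, h2⟩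
    · rcases i with _ | i
      · have := (key 0).2 rfl; tauto
      · omega
    · have := key j; tauto
    · have := (key i).2 rfl; tauto

theorem reach_of_solution {n S : ℕ} (s : PebbleSolution n) (hs : s.space ≤ S) :
    Reach n S s.T := by
  have hok : ∀ j ≤ s.T, Ok S (s.c j) := by
    intro j hj
    refine ⟨fun h => ?_, ?_⟩
    · have := mem_Icc.1 (s.subset j hj h); omega
    · refine le_trans ?_ hs
      exact le_sup (f := fun j => (s.c j).card) (mem_range.2 (by omega))
  have : ∀ j ≤ s.T, Path (Ok S) ∅ (s.c j) j := by
    intro j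
    induction j with
    | zero => intro h; have := hok 0 h; rw [s.init] at this ⊢; exact Path.nil this
    | succ j ih =>
      intro hj
      refine (ih (by omega)).trans (Path.cons (hok j (by omega)) ?_ (Path.nil (hok _ hj)))
      rw [step_iff (hok j (by omega)).1 (hok _ hj).1]
      simpa using s.move (j + 1) (by omega) hj
  have h := this s.T le_rfl
  rw [s.final] at h
  exact h.reach

/-- A path as a sequence indexed by time. -/
theorem Path.toFun {p : Finset ℕ → Prop} {a b : Finset ℕ} {T : ℕ} (h : Path p a b T) :
    ∃ c : ℕ → Finset ℕ, c 0 = a ∧ c T = b ∧ (∀ j ≤ T, p (c j)) ∧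
      ∀ j < T, Step (c j) (c (j + 1)) := by
  induction h with
  | @nil a ha => exact ⟨fun _ => a, rfl, rfl, fun _ _ => ha, fun j hj => by omega⟩
  | @cons a b d T ha hs h' ih =>
    obtain ⟨c, h0, hT, hp, hst⟩ := ih
    refine ⟨fun j => Nat.casesOn j a c, rfl, hT, ?_, ?_⟩
    · rintro (_ | j) hj
      · exact ha
      · exact hp j (by omega)
    · rintro (_ | j) hj
      · simpa [h0] using hs
      · exact hst j (by omega)

theorem solution_of_reach {n S T : ℕ} (h : Reach n S T) :
    ∃ s : PebbleSolution n, s.space ≤ S ∧ s.T ≤ T := by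
  obtain ⟨T', hT', p⟩ := h
  obtain ⟨T'', hT'', p'⟩ := p.low (q := Bd n S) n
    (fun c h => ⟨h.low _, fun i hi => (mem_low.1 hi).2⟩)
  rw [low_empty, low_singleton_of_le le_rfl] at p'
  obtain ⟨c, h0, hT, hp, hst⟩ := p'.toFun
  refine ⟨⟨T'', c, ?_, h0, hT, ?_⟩, ?_, by simpa using hT''.trans hT'⟩
  · intro j hj i hi
    rw [mem_Icc]
    refine ⟨?_, (hp j hj).2 i hi⟩
    rcases i with _ | i
    · exact absurd hi (hp j hj).1.1
    · omega
  · intro j h1 hj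
    obtain ⟨j, rfl⟩ : ∃ j', j = j' + 1 := ⟨j - 1, by omega⟩
    exact (step_iff (hp j (by omega)).1.1 (hp _ hj).1.1).1 (hst j (by omega))
  · refine Finset.sup_le fun j hj => (hp j ?_).1.2
    rw [mem_range] at hj
    exact Nat.lt_succ_iff.1 hj

theorem F_le_iff {n S T : ℕ} : F n S ≤ T ↔ Reach n S T := by
  constructor
  · intro h
    have hne : {t : ℕ∞ | ∃ s : PebbleSolution n, s.space ≤ S ∧ t = (s.T : ℕ∞)}.Nonempty := by
      by_contra hemp
      rw [Set.not_nonempty_iff_eq_empty] at hemp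
      rw [F, hemp, sInf_empty] at h
      simp at h
    obtain ⟨s, hs, ht⟩ := csInf_mem hne
    have h' : (s.T : ℕ∞) ≤ T := by rw [← ht]; exact h
    exact (reach_of_solution s hs).le (by exact_mod_cast h')
  · intro h
    obtain ⟨s, hs, ht⟩ := solution_of_reach h
    refine (show F n S ≤ (s.T : ℕ∞) from sInf_le ⟨s, hs, rfl⟩).trans ?_
    exact_mod_cast ht

theorem exists_of_F_lt_top {n S : ℕ} (h : F n S < ⊤) :
    ∃ T : ℕ, F n S = T ∧ Reach n S T := by
  obtain ⟨T, hT⟩ := ENat.ne_top_iff_exists.1 h.ne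
  exact ⟨T, hT.symm, F_le_iff.1 hT.symm.le⟩

theorem delta_le_succ (S n : ℕ) (hn : 1 ≤ n) : Δ (n : ℤ) S ≤ Δ ((n + 1 : ℕ) : ℤ) S := by
  have e1 : ¬ ((n : ℤ) ≤ 0) := by omega
  have e2 : ¬ (((n + 1 : ℕ) : ℤ) ≤ 0) := by omega
  simp only [Δ, if_neg e1, if_neg e2, Int.toNat_natCast]
  by_cases h2 : F (n + 1 + 1) S < ⊤
  swap
  · rw [if_neg h2]; exact le_top
  obtain ⟨T₂, hF₂, hR₂⟩ := exists_of_F_lt_top h2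
  have h1 : F (n + 1) S < ⊤ :=
    (F_le_iff.2 (hR₂.anti (by omega) (by omega))).trans_lt (ENat.natCast_lt_top _)
  have h0 : F n S < ⊤ :=
    (F_le_iff.2 (hR₂.anti hn (by omega))).trans_lt (ENat.natCast_lt_top _)
  obtain ⟨T₁, hF₁, hR₁⟩ := exists_of_F_lt_top h1
  obtain ⟨T₀, hF₀, hR₀⟩ := exists_of_F_lt_top h0
  obtain ⟨u, v, hu, hv, hle⟩ := Reach.convex hn (by omega) hR₀ hR₂
  have hu' := F_le_iff.2 hu
  have hv' := F_le_iff.2 hv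
  simp only [Nat.add_sub_cancel] at hv'
  rw [hF₁] at hu' hv'
  have hu'' : T₁ ≤ u := by exact_mod_cast hu'
  have hv'' : T₁ ≤ v := by exact_mod_cast hv'
  rw [if_pos h1, if_pos h2, hF₀, hF₁, hF₂]
  norm_cast
  omega

end Pebble

/-- `Δ n S` is nondecreasing in `n`. -/
theorem delta_monotone (S : ℕ) (hS : 1 ≤ S) (n n' : ℤ) (h : n ≤ n') :
    Δ n S ≤ Δ n' S := by
  rcases le_or_gt n 0 with h0 | h0
  · simp [Δ, h0]
  obtain ⟨m, rfl⟩ := Int.eq_ofNat_of_zero_le h0.le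
  obtain ⟨m', rfl⟩ := Int.eq_ofNat_of_zero_le (h0.le.trans h)
  have hm : 1 ≤ m := by omega
  have hmm : m ≤ m' := by omega
  clear h h0
  induction m', hmm using Nat.le_induction with
  | base => exact le_rfl
  | succ k hk ih => exact ih.trans (Pebble.delta_le_succ S k (by omega))
end
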